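/- arXiv:1609.08743 — 2 statements merged into one kernel-verified Lean document; each statement's English description precedes it below -/
import Mathlib

section
/- Assume a ∈ (0,1), b ≥ 1−a, and that α, β, p, h satisfy either α ≥ √3·β, or (α < √3·β and 4h(β+p) ≥ p⁴). Let c, d > 0 with 0 < c/d ≤ (β+p)/k and let δ₁ = [(a−b−1) + √((p−1)² + 4β(c/d))]/2. Then for all x ∈ (0,1) and all δ ∈ (a−1, δ₁], F(a−1, b; p; 1−x^c) + C₁(δ)(1−x^c) < F(a−1−δ, b+δ; p; 1−x^d) < F(a−1, b; p; 1−x^c) + C₂(δ)(1−x^c), where C₁(δ) = (d/(pc))·((c/d − 1)β + (a−b−1)δ − δ²) and C₂(δ) = 1/(p·B(a−δ, b+1+δ)) − 1/(p·B(a, b+1)). -/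
open Real Set Filter Topology

/-- The Gaussian hypergeometric function `F(a,b;c;x)`, defined as a power series
with Pochhammer (shifted factorial) coefficients. -/
noncomputable def hyp (a b c x : ℝ) : ℝ :=
  ∑' n : ℕ, ((∏ i ∈ Finset.range n, (a + i)) * (∏ i ∈ Finset.range n, (b + i)) /
    ((∏ i ∈ Finset.range n, (c + i)) * (Nat.factorial n))) * x ^ n

/-- The Euler beta function `B(x,y) = Γ(x)Γ(y)/Γ(x+y)`. -/
noncomputable def betaFn (x y : ℝ) : ℝ := Real.Gamma x * Real.Gamma y / Real.Gamma (x + y)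

/-! Put `r = c / d`. As a function of `u = 1 - x ^ c`, the difference of the two hypergeometric
functions is strictly convex on `[0, 1]` and vanishes at `0`; the tangent at `0` and the chord to
the value at `1`, which is given by Gauss's theorem, are the two bounds.

For the convexity, substitute `u = 1 - exp (-(r * v))`. Up to a positive factor the derivative is
then `D v = C * R (r * v) - y * X v`, where `R` and `X` are zero-balanced hypergeometric functions
in the variable `-log (1 - z)`, the second one damped by `exp (-((1 - r) * v))`. Their
differential equations combine to `E * D'' + (S + 2 * (1 - r) * E) * D' > κ * (D - D 0)` with
`E = exp v - 1`, `κ ≥ 0` and `S ≥ κ`, so that `D'` cannot have a first zero once `D' 0 ≥ 0`. The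
condition `c / d ≤ (β + p) / k` bounds the growth of `X` well enough for this inequality, and the
alternative on `α`, `β`, `p`, `h` ensures `D' 0 ≥ 0`. -/

/-- The coefficient of `x ^ n` in the series `hyp a b c x`. -/
noncomputable def hypCoeff (a b c : ℝ) (n : ℕ) : ℝ :=
  (∏ i ∈ Finset.range n, (a + i)) * (∏ i ∈ Finset.range n, (b + i)) /
    ((∏ i ∈ Finset.range n, (c + i)) * (Nat.factorial n))

section Coefficients

variable {a b c : ℝ}

lemma hypCoeff_zero (a b c : ℝ) : hypCoeff a b c 0 = 1 := by
  simp [hypCoeff]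

lemma hyp_zero (a b c : ℝ) : hyp a b c 0 = 1 :=
  (tsum_eq_single 0 fun n hn => by simp [hn]).trans (by simp)

lemma hypCoeff_pos (ha : 0 < a) (hb : 0 < b) (hc : 0 < c) (n : ℕ) : 0 < hypCoeff a b c n := by
  unfold hypCoeff
  have hprod {t : ℝ} (ht : 0 < t) : 0 < ∏ i ∈ Finset.range n, (t + i) :=
    Finset.prod_pos fun i _ => by positivity
  have := hprod ha
  have := hprod hb
  have := hprod hc
  positivity

lemma succ_mul_hypCoeff_succ (a b c : ℝ) (n : ℕ) :
    ((n : ℝ) + 1) * hypCoeff a b c (n + 1) =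
      (a + n) * (b + n) / (c + n) * hypCoeff a b c n := by
  simp only [hypCoeff, Finset.prod_range_succ, Nat.factorial_succ]
  push_cast
  field_simp

lemma succ_mul_hypCoeff_succ_eq_shift (a b c : ℝ) (n : ℕ) :
    ((n : ℝ) + 1) * hypCoeff a b c (n + 1) =
      a * b / c * hypCoeff (a + 1) (b + 1) (c + 1) n := by
  have hshift (t : ℝ) : ∏ i ∈ Finset.range (n + 1), (t + i) =
      t * ∏ i ∈ Finset.range n, (t + 1 + i) := by
    rw [Finset.prod_range_succ', mul_comm]
    simp only [Nat.cast_zero, add_zero, Nat.cast_add_one, add_assoc, add_comm (1 : ℝ)]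
  simp only [hypCoeff, hshift, Nat.factorial_succ]
  push_cast
  field_simp

lemma add_natCast_mul_hypCoeff_add_one (a b : ℝ) (hc : 0 < c) (n : ℕ) :
    (c + n) * hypCoeff a b (c + 1) n = c * hypCoeff a b c n := by
  induction n with
  | zero => simp [hypCoeff_zero]
  | succ n ih =>
    have h₀ := succ_mul_hypCoeff_succ a b c n
    have h₁ := succ_mul_hypCoeff_succ a b (c + 1) n
    have hcn : c + n ≠ 0 := by positivity
    have hcn' : c + 1 + n ≠ 0 := by positivity
    have hn : (n : ℝ) + 1 ≠ 0 := by positivity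
    rw [div_mul_eq_mul_div, eq_div_iff ‹_›] at h₀ h₁
    apply mul_left_cancel₀ (mul_ne_zero hn hcn)
    push_cast
    linear_combination (c + n) * h₁ - c * h₀ + (a + n) * (b + n) * ih

lemma hypCoeff_succ_sub_hypCoeff (a b : ℝ) (hab : 0 < a + b + 1) (n : ℕ) :
    hypCoeff (a + 1) (b + 1) (a + b + 1) (n + 1) - hypCoeff (a + 1) (b + 1) (a + b + 1) n =
      hypCoeff a b (a + b + 1) (n + 1) := by
  have h₁ := succ_mul_hypCoeff_succ (a + 1) (b + 1) (a + b + 1) n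
  have h₂ := succ_mul_hypCoeff_succ_eq_shift a b (a + b + 1) n
  have h₃ := add_natCast_mul_hypCoeff_add_one (a + 1) (b + 1) hab n
  have hn : (n : ℝ) + 1 ≠ 0 := by positivity
  have hcn : a + b + 1 + n ≠ 0 := by positivity
  rw [div_mul_eq_mul_div, eq_div_iff (by positivity)] at h₁ h₂
  have h₄ : (a + b + 1 + n) * ((n + 1) * hypCoeff a b (a + b + 1) (n + 1)) =
      a * b * hypCoeff (a + 1) (b + 1) (a + b + 1) n := by
    apply mul_left_cancel₀ hab.ne'
    linear_combination (a + b + 1 + n) * h₂ + a * b * h₃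
  apply mul_left_cancel₀ (mul_ne_zero hn hcn)
  linear_combination h₁ - h₄

lemma sum_range_succ_hypCoeff (a b : ℝ) (hab : 0 < a + b + 1) (n : ℕ) :
    ∑ i ∈ Finset.range (n + 1), hypCoeff a b (a + b + 1) i =
      hypCoeff (a + 1) (b + 1) (a + b + 1) n := by
  induction n with
  | zero => simp [hypCoeff_zero]
  | succ n ih =>
    rw [Finset.sum_range_succ, ih, ← hypCoeff_succ_sub_hypCoeff a b hab, add_sub_cancel]

lemma tendsto_inv_GammaSeq (s : ℝ) :
    Tendsto (fun n => (Real.GammaSeq s n)⁻¹) atTop (𝓝 (Gamma s)⁻¹) := by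
  -- At the poles the convention `Gamma s = 0` gives `(Gamma s)⁻¹` its correct value `0`.
  by_cases hs : Gamma s = 0
  · obtain ⟨m, rfl⟩ := (Real.Gamma_eq_zero_iff s).1 hs
    rw [hs]
    refine tendsto_const_nhds.congr' ?_
    filter_upwards [eventually_ge_atTop m] with n hn
    have : ∏ j ∈ Finset.range (n + 1), (-(m : ℝ) + j) = 0 :=
      Finset.prod_eq_zero (Finset.mem_range.2 (Nat.lt_succ_of_le hn)) (by simp)
    simp [Real.GammaSeq, this]
  · exact (Real.GammaSeq_tendsto_Gamma s).inv₀ hs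

lemma tendsto_rpow_mul_hypCoeff_succ (a b c : ℝ) :
    Tendsto (fun n : ℕ => (n : ℝ) ^ (c + 1 - a - b) * hypCoeff a b c (n + 1)) atTop
      (𝓝 (Gamma c / (Gamma a * Gamma b))) := by
  have hlim := (((Real.GammaSeq_tendsto_Gamma c).mul (tendsto_inv_GammaSeq a)).mul
    (tendsto_inv_GammaSeq b)).mul (tendsto_natCast_div_add_atTop (1 : ℝ))
  rw [mul_one, mul_assoc, ← mul_inv, ← div_eq_mul_inv] at hlim
  refine hlim.congr' ?_
  filter_upwards [eventually_gt_atTop 0] with n hn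
  have hn' : (0 : ℝ) < n := by exact_mod_cast hn
  have hpow : (n : ℝ) ^ (c + 1 - a - b) = (n : ℝ) ^ c * n / ((n : ℝ) ^ a * (n : ℝ) ^ b) := by
    rw [← rpow_add_one hn'.ne', ← rpow_add hn', ← rpow_sub hn', sub_sub]
  have hna := (rpow_pos_of_pos hn' a).ne'
  have hnb := (rpow_pos_of_pos hn' b).ne'
  have hfact : (n.factorial : ℝ) ≠ 0 := by positivity
  simp only [Real.GammaSeq, hypCoeff, hpow, Nat.factorial_succ]
  push_cast
  field_simp

lemma summable_hypCoeff (h : a + b < c) : Summable (hypCoeff a b c) := by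
  rw [← summable_nat_add_iff 1]
  have hexp : -(c + 1 - a - b) < -1 := by linarith
  refine summable_of_isBigO_nat (Real.summable_nat_rpow.2 hexp) ?_
  have hO := (Asymptotics.isBigO_refl (fun n : ℕ => (n : ℝ) ^ (-(c + 1 - a - b))) atTop).mul
    ((tendsto_rpow_mul_hypCoeff_succ a b c).isBigO_one ℝ)
  refine hO.congr' ?_ (by simp)
  filter_upwards [eventually_gt_atTop 0] with n hn
  have hn' : (0 : ℝ) < n := by exact_mod_cast hn
  rw [← mul_assoc, ← rpow_add hn', neg_add_cancel, rpow_zero, one_mul]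

lemma continuousOn_hyp_Icc (h : a + b < c) : ContinuousOn (hyp a b c) (Icc 0 1) := by
  refine continuousOn_tsum (fun n => by fun_prop) (summable_hypCoeff h).norm fun n x hx => ?_
  rw [norm_mul, norm_pow, Real.norm_of_nonneg hx.1]
  exact mul_le_of_le_one_right (norm_nonneg _) (pow_le_one₀ hx.1 hx.2)

/-- Gauss's summation theorem at `c = a + b + 1`, where the partial sums have a closed form. -/
lemma hyp_one_of_add_one (hab : 0 < a + b + 1) :
    hyp a b (a + b + 1) 1 = 1 / ((a + b + 1) * betaFn (a + 1) (b + 1)) := by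
  have hsum := (summable_hypCoeff (lt_add_one (a + b))).hasSum.tendsto_sum_nat
  rw [← tendsto_add_atTop_iff_nat 2] at hsum
  simp only [sum_range_succ_hypCoeff a b hab] at hsum
  have hlim := tendsto_rpow_mul_hypCoeff_succ (a + 1) (b + 1) (a + b + 1)
  rw [show a + b + 1 + 1 - (a + 1) - (b + 1) = 0 by ring] at hlim
  simp only [rpow_zero, one_mul] at hlim
  have hval : hyp a b (a + b + 1) 1 = ∑' n, hypCoeff a b (a + b + 1) n := by
    simp only [hyp, hypCoeff, one_pow, mul_one]
  rw [hval, tendsto_nhds_unique hsum hlim, betaFn,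
    show a + 1 + (b + 1) = a + b + 1 + 1 by ring, Gamma_add_one hab.ne']
  have := (Gamma_pos_of_pos hab).ne'
  field_simp

end Coefficients

section UnitInterval

variable {a b c z : ℝ}

lemma summable_hypCoeff_mul_pow (a b c : ℝ) (hz : |z| < 1) :
    Summable fun n => hypCoeff a b c n * z ^ n := by
  obtain ⟨r, hzr, hr⟩ := exists_between hz
  have hratio : Tendsto (fun n : ℕ => ‖(a + 1 * n) / (1 + 1 * n) * ((b + 1 * n) / (c + 1 * n)) * z‖)
      atTop (𝓝 |z|) := by
    simpa using (((tendsto_add_mul_div_add_mul_atTop_nhds a 1 1 one_ne_zero).mul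
      (tendsto_add_mul_div_add_mul_atTop_nhds b c 1 one_ne_zero)).mul_const z).norm
  refine summable_of_ratio_norm_eventually_le hr ?_
  filter_upwards [hratio.eventually_le_const hzr] with n hn
  have hn' : (n : ℝ) + 1 ≠ 0 := by positivity
  have hstep : hypCoeff a b c (n + 1) * z ^ (n + 1) =
      (a + 1 * n) / (1 + 1 * n) * ((b + 1 * n) / (c + 1 * n)) * z *
        (hypCoeff a b c n * z ^ n) := by
    rw [eq_div_of_mul_eq hn' ((mul_comm _ _).trans (succ_mul_hypCoeff_succ a b c n)), pow_succ]
    ring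
  rw [hstep, norm_mul]
  gcongr

lemma hasSum_hyp (a b c : ℝ) (hz : |z| < 1) :
    HasSum (fun n => hypCoeff a b c n * z ^ n) (hyp a b c z) :=
  (summable_hypCoeff_mul_pow a b c hz).hasSum

lemma hasSum_hyp_sub_one (a b c : ℝ) (hz : |z| < 1) :
    HasSum (fun n => hypCoeff a b c (n + 1) * z ^ (n + 1)) (hyp a b c z - 1) := by
  simpa [hypCoeff_zero] using (hasSum_nat_add_iff' 1).2 (hasSum_hyp a b c hz)

lemma hasDerivAt_hyp (a b c : ℝ) (hz : |z| < 1) :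
    HasDerivAt (hyp a b c) (a * b / c * hyp (a + 1) (b + 1) (c + 1) z) z := by
  obtain ⟨ρ, hzρ, hρ⟩ := exists_between hz
  have hρ₀ : 0 < ρ := (abs_nonneg z).trans_lt hzρ
  have hu : Summable fun n : ℕ => ‖hypCoeff a b c n * (n * ρ ^ (n - 1))‖ := by
    rw [← summable_nat_add_iff 1]
    refine ((summable_hypCoeff_mul_pow (a + 1) (b + 1) (c + 1)
      ((abs_of_pos hρ₀).trans_lt hρ)).mul_left (a * b / c)).norm.congr fun n => ?_
    rw [← mul_assoc, ← succ_mul_hypCoeff_succ_eq_shift, add_tsub_cancel_right]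
    push_cast
    ring_nf
  have hmem : z ∈ Ioo (-ρ) ρ := abs_lt.1 hzρ
  have hderiv := hasDerivAt_tsum_of_isPreconnected (t := Ioo (-ρ) ρ) hu isOpen_Ioo
    isPreconnected_Ioo (fun n x _ => (hasDerivAt_pow n x).const_mul (hypCoeff a b c n))
    (fun n x hx => by
      have : |x| ≤ |ρ| := ((abs_lt.2 hx).trans_eq (abs_of_pos hρ₀).symm).le
      simp only [norm_mul, norm_pow, Real.norm_eq_abs]
      gcongr)
    hmem (summable_hypCoeff_mul_pow a b c hz) hmem
  have hsum : Summable fun n : ℕ => hypCoeff a b c n * (n * z ^ (n - 1)) :=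
    hu.of_norm_bounded fun n => by
      simp only [norm_mul, norm_pow, Real.norm_eq_abs, abs_of_pos hρ₀]
      gcongr
  refine hderiv.congr_deriv ?_
  rw [hsum.tsum_eq_zero_add, Nat.cast_zero, zero_mul, mul_zero, zero_add]
  refine (((hasSum_hyp (a + 1) (b + 1) (c + 1) hz).mul_left (a * b / c)).congr_fun
    fun n => ?_).tsum_eq
  rw [← mul_assoc (a * b / c), ← succ_mul_hypCoeff_succ_eq_shift, add_tsub_cancel_right]
  push_cast
  ring

lemma hyp_pos (ha : 0 < a) (hb : 0 < b) (hc : 0 < c) (hz₀ : 0 ≤ z) (hz₁ : z < 1) :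
    0 < hyp a b c z :=
  (summable_hypCoeff_mul_pow a b c ((abs_of_nonneg hz₀).trans_lt hz₁)).tsum_pos
    (fun n => mul_nonneg (hypCoeff_pos ha hb hc n).le (pow_nonneg hz₀ n)) 0
    (by simp [hypCoeff_zero])

lemma mul_hyp_add_one (a b : ℝ) (hc : 0 < c) (hz : |z| < 1) :
    z * (a * b / (c + 1) * hyp (a + 1) (b + 1) (c + 1 + 1) z) =
      c * (hyp a b c z - hyp a b (c + 1) z) := by
  have hshift := (hasSum_hyp (a + 1) (b + 1) (c + 1 + 1) hz).mul_left (z * (a * b / (c + 1)))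
  have hsub := ((hasSum_hyp_sub_one a b c hz).sub (hasSum_hyp_sub_one a b (c + 1) hz)).mul_left c
  rw [sub_sub_sub_cancel_right] at hsub
  rw [← mul_assoc]
  refine hshift.unique (hsub.congr_fun fun n => ?_)
  have h₁ := succ_mul_hypCoeff_succ_eq_shift a b (c + 1) n
  have h₂ := add_natCast_mul_hypCoeff_add_one a b hc (n + 1)
  push_cast at h₂
  linear_combination (-z ^ (n + 1)) * h₁ + z ^ (n + 1) * h₂

lemma hyp_add_one_le (ha : 0 < a) (hb : 0 < b) (hc : 0 < c) (hz₀ : 0 ≤ z) (hz₁ : z < 1) :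
    hyp a b (c + 1) z ≤ hyp a b c z := by
  have hF := hyp_pos (add_pos ha one_pos) (add_pos hb one_pos)
    (add_pos (add_pos hc one_pos) one_pos) hz₀ hz₁
  refine sub_nonneg.1 (nonneg_of_mul_nonneg_right ?_ hc)
  rw [← mul_hyp_add_one a b hc ((abs_of_nonneg hz₀).trans_lt hz₁)]
  positivity

lemma one_sub_mul_hyp_add_one (a b : ℝ) (hab : 0 < a + b + 1) (hz : |z| < 1) :
    (1 - z) * hyp (a + 1) (b + 1) (a + b + 1) z = hyp a b (a + b + 1) z := by
  have hsub := (hasSum_hyp_sub_one (a + 1) (b + 1) (a + b + 1) hz).sub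
    ((hasSum_hyp (a + 1) (b + 1) (a + b + 1) hz).mul_left z)
  have heq := hsub.unique ((hasSum_hyp_sub_one a b (a + b + 1) hz).congr_fun fun n => by
    rw [← hypCoeff_succ_sub_hypCoeff a b hab]
    ring)
  linear_combination heq

end UnitInterval

section LogVariable

variable {a b m v : ℝ}

/-- The zero-balanced function `F(a,b;a+b;z)` in the variable `v = -log (1 - z)`, multiplied by the
power `(1 - z) ^ m`. In this variable a power `1 - (1 - z) ^ r` of the argument becomes a dilation
`v ↦ r v`. -/
noncomputable def twistedHyp (a b m v : ℝ) : ℝ :=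
  exp (-(m * v)) * hyp a b (a + b) (1 - exp (-v))

/-- The derivative of `twistedHyp a b m`. -/
noncomputable def twistedHypDeriv (a b m v : ℝ) : ℝ :=
  exp (-(m * v)) * (a * b / (a + b) * hyp a b (a + b + 1) (1 - exp (-v)) -
    m * hyp a b (a + b) (1 - exp (-v)))

/-- The second derivative of `twistedHyp a b m`, as given by the hypergeometric differential
equation. -/
noncomputable def twistedHypDeriv₂ (a b m v : ℝ) : ℝ :=
  ((a * b - m * (a + b) - m ^ 2 * (exp v - 1)) * twistedHyp a b m v -
    (a + b + 2 * m * (exp v - 1)) * twistedHypDeriv a b m v) / (exp v - 1)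

lemma abs_one_sub_exp_neg_lt_one (hv : 0 ≤ v) : |1 - exp (-v)| < 1 := by
  have := exp_le_one_iff.2 (neg_nonpos.2 hv)
  rw [abs_of_nonneg (sub_nonneg.2 this)]
  linarith [exp_pos (-v)]

lemma hasDerivAt_one_sub_exp_neg (v : ℝ) : HasDerivAt (fun v => 1 - exp (-v)) (exp (-v)) v := by
  simpa using ((hasDerivAt_neg v).exp.const_sub 1)

lemma twistedHyp_zero (a b m : ℝ) : twistedHyp a b m 0 = 1 := by
  simp [twistedHyp, hyp_zero]

lemma twistedHypDeriv_zero (a b m : ℝ) : twistedHypDeriv a b m 0 = a * b / (a + b) - m := by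
  simp [twistedHypDeriv, hyp_zero]

lemma hasDerivAt_twistedHyp (m : ℝ) (hab : 0 < a + b) (hv : 0 ≤ v) :
    HasDerivAt (twistedHyp a b m) (twistedHypDeriv a b m v) v := by
  have hz := abs_one_sub_exp_neg_lt_one hv
  have hexp : HasDerivAt (fun v => exp (-(m * v))) (exp (-(m * v)) * -m) v := by
    simpa using (((hasDerivAt_id v).const_mul m).neg.exp)
  have hF := (hasDerivAt_hyp a b (a + b) hz).comp v (hasDerivAt_one_sub_exp_neg v)
  have hEuler := one_sub_mul_hyp_add_one a b (add_pos hab one_pos) hz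
  refine (hexp.mul hF).congr_deriv ?_
  rw [twistedHypDeriv, ← hEuler]
  simp only [Function.comp_apply]
  ring

lemma hasDerivAt_twistedHypDeriv (m : ℝ) (hab : 0 < a + b) (hv : 0 < v) :
    HasDerivAt (twistedHypDeriv a b m) (twistedHypDeriv₂ a b m v) v := by
  have hz := abs_one_sub_exp_neg_lt_one hv.le
  have hE : exp v - 1 ≠ 0 := (sub_pos.2 (one_lt_exp_iff.2 hv)).ne'
  have hexp : HasDerivAt (fun v => exp (-(m * v))) (exp (-(m * v)) * -m) v := by
    simpa using (((hasDerivAt_id v).const_mul m).neg.exp)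
  have hF := (hasDerivAt_hyp a b (a + b) hz).comp v (hasDerivAt_one_sub_exp_neg v)
  have hG := (hasDerivAt_hyp a b (a + b + 1) hz).comp v (hasDerivAt_one_sub_exp_neg v)
  have hEuler := one_sub_mul_hyp_add_one a b (add_pos hab one_pos) hz
  have hcontig := mul_hyp_add_one a b hab hz
  refine (hexp.mul ((hG.const_mul (a * b / (a + b))).sub (hF.const_mul m))).congr_deriv ?_
  have hexpv : exp (-v) * exp v = 1 := by rw [← exp_add, neg_add_cancel, exp_zero]
  rw [twistedHypDeriv₂, eq_div_iff hE, twistedHyp, twistedHypDeriv]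
  simp only [Function.comp_apply, Pi.sub_apply]
  have hS : a * b / (a + b) * (a + b) = a * b := div_mul_cancel₀ _ hab.ne'
  linear_combination exp (-(m * v)) * (a * b / (a + b)) * hcontig +
    exp (-(m * v)) * (a * b / (a + b)) *
      (a * b / (a + b + 1) * hyp (a + 1) (b + 1) (a + b + 1 + 1) (1 - exp (-v))) * hexpv -
    m * exp (-(m * v)) * (a * b / (a + b)) * (exp v - 1) * hEuler +
    exp (-(m * v)) * hyp a b (a + b) (1 - exp (-v)) * hS

lemma continuousAt_twistedHypDeriv (a b m : ℝ) (hv : 0 ≤ v) :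
    ContinuousAt (twistedHypDeriv a b m) v := by
  have hhyp (c : ℝ) : ContinuousAt (fun v => hyp a b c (1 - exp (-v))) v :=
    ContinuousAt.comp (f := fun v => 1 - exp (-v))
      (hasDerivAt_hyp a b c (abs_one_sub_exp_neg_lt_one hv)).continuousAt (by fun_prop)
  exact ContinuousAt.mul (by fun_prop)
    (((hhyp (a + b + 1)).const_mul (a * b / (a + b))).sub ((hhyp (a + b)).const_mul m))

lemma twistedHyp_pos (m : ℝ) (ha : 0 < a) (hb : 0 < b) (hv : 0 ≤ v) : 0 < twistedHyp a b m v :=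
  mul_pos (exp_pos _) (hyp_pos ha hb (add_pos ha hb)
    (sub_nonneg.2 (exp_le_one_iff.2 (neg_nonpos.2 hv))) (sub_lt_self 1 (exp_pos _)))

lemma twistedHypDeriv_le (m : ℝ) (ha : 0 < a) (hb : 0 < b) (hv : 0 ≤ v) :
    twistedHypDeriv a b m v ≤ (a * b / (a + b) - m) * twistedHyp a b m v := by
  have hle := hyp_add_one_le ha hb (add_pos ha hb)
    (sub_nonneg.2 (exp_le_one_iff.2 (neg_nonpos.2 hv))) (sub_lt_self 1 (exp_pos (-v)))
  rw [twistedHyp, twistedHypDeriv, mul_left_comm, sub_mul]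
  gcongr

lemma sub_mul_twistedHyp_le_max {e : ℝ} (ha : 0 < a) (hb : 0 < b)
    (he : 0 < e → e * (a * b / (a + b) - m) ≤ m ^ 2) (hv : 0 ≤ v) :
    (e - m ^ 2 * (exp v - 1)) * twistedHyp a b m v ≤ max e 0 := by
  rcases le_or_gt (e - m ^ 2 * (exp v - 1)) 0 with hev | hev
  · exact (mul_nonpos_of_nonpos_of_nonneg hev (twistedHyp_pos m ha hb hv).le).trans
      (le_max_right _ _)
  have hanti : AntitoneOn (fun s => (e - m ^ 2 * (exp s - 1)) * twistedHyp a b m s) (Icc 0 v) := by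
    have hderiv {s : ℝ} (hs : s ∈ Icc 0 v) :=
      ((((hasDerivAt_exp s).sub_const 1).const_mul (m ^ 2)).const_sub e).mul
        (hasDerivAt_twistedHyp m (add_pos ha hb) hs.1)
    refine antitoneOn_of_hasDerivWithinAt_nonpos (convex_Icc 0 v)
      (fun s hs => (hderiv hs).continuousAt.continuousWithinAt)
      (fun s hs => (hderiv (interior_subset hs)).hasDerivWithinAt) fun s hs => ?_
    obtain ⟨hs₀, hsv⟩ := interior_subset hs
    have hX := twistedHyp_pos m ha hb hs₀
    have hm : m ^ 2 ≤ m ^ 2 * exp s := le_mul_of_one_le_right (sq_nonneg m) (one_le_exp hs₀)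
    have hes : 0 < e - m ^ 2 * (exp s - 1) := hev.trans_le (by gcongr)
    have hrate : (e - m ^ 2 * (exp s - 1)) * (a * b / (a + b) - m) ≤ m ^ 2 * exp s := by
      rcases le_or_gt (a * b / (a + b) - m) 0 with hρ | hρ
      · exact (mul_nonpos_of_nonneg_of_nonpos hes.le hρ).trans ((sq_nonneg m).trans hm)
      · exact (mul_le_mul_of_nonneg_right (by linarith) hρ.le).trans ((he (by linarith)).trans hm)
    have hX' := mul_le_mul_of_nonneg_left (twistedHypDeriv_le m ha hb hs₀) hes.le
    linarith [mul_le_mul_of_nonneg_right hrate hX.le]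
  refine (hanti (left_mem_Icc.2 hv) (right_mem_Icc.2 hv) hv).trans ?_
  simp [twistedHyp_zero]

end LogVariable

section Comparison

variable {I W W' E g : ℝ → ℝ} {κ : ℝ}

lemma nonpos_of_hasDerivAt_of_forall_le {f : ℝ → ℝ} {f' s t : ℝ} (hst : s < t)
    (hf : HasDerivAt f f' t) (hmin : ∀ u ∈ Ioo s t, f t ≤ f u) : f' ≤ 0 := by
  refine le_of_tendsto ((hasDerivWithinAt_iff_tendsto_slope' self_notMem_Iio).1
    (hf.hasDerivWithinAt (s := Iio t))) ?_
  filter_upwards [Ioo_mem_nhdsLT hst] with u hu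
  rw [slope_def_field]
  exact div_nonpos_of_nonneg_of_nonpos (sub_nonneg.2 (hmin u hu)) (sub_nonpos.2 hu.2.le)

/-- At a first zero of `W = I'` the strict inequality fails, since there `W' ≤ 0 ≤ I`. -/
lemma pos_of_forall_Ico_nonneg {t : ℝ} (ht : 0 < t) (hκ : 0 ≤ κ) (hI₀ : 0 ≤ I 0)
    (hI : ∀ v, 0 ≤ v → HasDerivAt I (W v) v) (hW : HasDerivAt W (W' t) t)
    (hE : 0 ≤ E t) (hg : 0 ≤ g t) (hlt : κ * I t < E t * W' t + g t * W t)
    (hnonneg : ∀ s ∈ Ico 0 t, 0 ≤ W s) : 0 < W t := by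
  by_contra! hWt
  have hW' : W' t ≤ 0 := nonpos_of_hasDerivAt_of_forall_le ht hW fun u hu =>
    hWt.trans (hnonneg u (Ioo_subset_Ico_self hu))
  have hmono : MonotoneOn I (Icc 0 t) :=
    monotoneOn_of_hasDerivWithinAt_nonneg (convex_Icc 0 t)
      (fun s hs => (hI s hs.1).continuousAt.continuousWithinAt)
      (fun s hs => (hI s (interior_subset hs).1).hasDerivWithinAt)
      fun s hs => hnonneg s (Ioo_subset_Ico_self (interior_Icc.subset hs))
  have hIt : 0 ≤ I t := hI₀.trans (hmono (left_mem_Icc.2 ht.le) (right_mem_Icc.2 ht.le) ht.le)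
  linarith [mul_nonneg hκ hIt, mul_nonpos_of_nonneg_of_nonpos hE hW',
    mul_nonpos_of_nonneg_of_nonpos hg hWt]

lemma pos_of_pos_zero_of_mul_lt (hκ : 0 ≤ κ) (hI₀ : 0 ≤ I 0) (hW₀ : 0 < W 0)
    (hI : ∀ v, 0 ≤ v → HasDerivAt I (W v) v) (hWc : ContinuousOn W (Ici 0))
    (hW : ∀ v, 0 < v → HasDerivAt W (W' v) v)
    (hE : ∀ v, 0 < v → 0 ≤ E v) (hg : ∀ v, 0 < v → 0 ≤ g v)
    (hlt : ∀ v, 0 < v → κ * I v < E v * W' v + g v * W v) {v : ℝ} (hv : 0 ≤ v) : 0 < W v := by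
  by_contra! hWv
  have hclosed : IsClosed (Icc 0 v ∩ W ⁻¹' Iic 0) :=
    (hWc.mono Icc_subset_Ici_self).preimage_isClosed_of_isClosed isClosed_Icc isClosed_Iic
  obtain ⟨t, ⟨⟨ht, hWt⟩, hleast⟩⟩ := (isCompact_Icc.of_isClosed_subset hclosed
    inter_subset_left).exists_isLeast ⟨v, right_mem_Icc.2 hv, hWv⟩
  have ht₀ : 0 < t := ht.1.lt_of_ne (by rintro rfl; exact hW₀.not_ge hWt)
  refine (pos_of_forall_Ico_nonneg ht₀ hκ hI₀ hI (hW t ht₀) (hE t ht₀) (hg t ht₀) (hlt t ht₀)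
    fun s hs => ?_).not_ge hWt
  by_contra! hWs
  exact (hleast ⟨⟨hs.1, hs.2.le.trans ht.2⟩, hWs.le⟩).not_gt hs.2

lemma pos_of_mul_lt (hκ : 0 ≤ κ) (hI₀ : 0 ≤ I 0) (hW₀ : 0 ≤ W 0)
    (hI : ∀ v, 0 ≤ v → HasDerivAt I (W v) v) (hWc : ContinuousOn W (Ici 0))
    (hW : ∀ v, 0 < v → HasDerivAt W (W' v) v)
    (hE : ∀ v, 0 < v → 0 ≤ E v) (hg : ∀ v, 0 < v → κ ≤ g v)
    (hlt : ∀ v, 0 < v → κ * I v < E v * W' v + g v * W v) {v : ℝ} (hv : 0 < v) : 0 < W v := by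
  have hg' (v : ℝ) (hv : 0 < v) : 0 ≤ g v := hκ.trans (hg v hv)
  -- Adding `ε * (exp v - 1)` to `I` preserves the inequality since `κ ≤ g`, and makes `W 0 > 0`.
  have hperturbed {ε : ℝ} (hε : 0 < ε) {s : ℝ} (hs : 0 ≤ s) : 0 < W s + ε * exp s := by
    refine pos_of_pos_zero_of_mul_lt (I := fun s => I s + ε * (exp s - 1))
      (W := fun s => W s + ε * exp s) (W' := fun s => W' s + ε * exp s) hκ (by simpa)
      (by simp only [exp_zero]; linarith)
      (fun s hs => (hI s hs).add (((hasDerivAt_exp s).sub_const 1).const_mul ε))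
      (hWc.add (by fun_prop)) (fun s hs => (hW s hs).add ((hasDerivAt_exp s).const_mul ε))
      hE hg' (fun s hs => ?_) hs
    have hgs : κ * exp s ≤ g s * exp s := mul_le_mul_of_nonneg_right (hg s hs) (exp_pos s).le
    have hextra : 0 ≤ ε * (E s * exp s + (g s * exp s - κ * exp s) + κ) :=
      mul_nonneg hε.le (by linarith [mul_nonneg (hE s hs) (exp_pos s).le])
    linarith [hlt s hs]
  have hnonneg {s : ℝ} (hs : 0 ≤ s) : 0 ≤ W s := by
    have hlim : Tendsto (fun ε => W s + ε * exp s) (𝓝[>] 0) (𝓝 (W s + 0 * exp s)) :=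
      (Continuous.tendsto (by fun_prop) 0).mono_left nhdsWithin_le_nhds
    rw [zero_mul, add_zero] at hlim
    exact ge_of_tendsto hlim (eventually_mem_nhdsWithin.mono fun ε hε => (hperturbed hε hs).le)
  exact pos_of_forall_Ico_nonneg hv hκ hI₀ hI (hW v hv) (hE v hv) (hg' v hv) (hlt v hv)
    fun s hs => hnonneg hs.1

end Comparison

section Dilation

variable {a b m r v : ℝ}

lemma exp_mul_sub_one_le (hr₀ : 0 ≤ r) (hr₁ : r ≤ 1) (v : ℝ) :
    exp (r * v) - 1 ≤ r * (exp v - 1) := by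
  have h := rpow_one_add_le_one_add_mul_self (s := exp v - 1) (by linarith [exp_pos v]) hr₀ hr₁
  rw [add_sub_cancel, ← exp_mul, mul_comm v] at h
  linarith

lemma twistedHypDeriv_untwisted_pos (ha : 0 < a) (hb : 0 < b) (hv : 0 ≤ v) :
    0 < twistedHypDeriv a b 0 v := by
  have := hyp_pos ha hb (add_pos (add_pos ha hb) one_pos)
    (sub_nonneg.2 (exp_le_one_iff.2 (neg_nonpos.2 hv))) (sub_lt_self 1 (exp_pos (-v)))
  simp only [twistedHypDeriv, zero_mul, sub_zero]
  positivity

lemma mul_twistedHyp_dilation_le (ha : 0 < a) (hb : 0 < b) (hr₀ : 0 < r) (hr₁ : r ≤ 1)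
    (hv : 0 < v) :
    a * b * twistedHyp a b 0 (r * v) ≤
      r * (exp v - 1) * twistedHypDeriv₂ a b 0 (r * v) +
        (a + b) * twistedHypDeriv a b 0 (r * v) := by
  have hrv : 0 < r * v := mul_pos hr₀ hv
  have hE : 0 < exp (r * v) - 1 := sub_pos.2 (one_lt_exp_iff.2 hrv)
  have hR' := twistedHypDeriv_le 0 ha hb hrv.le
  rw [sub_zero, div_mul_eq_mul_div, le_div_iff₀ (add_pos ha hb)] at hR'
  have hR'' : twistedHypDeriv₂ a b 0 (r * v) = (a * b * twistedHyp a b 0 (r * v) -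
      (a + b) * twistedHypDeriv a b 0 (r * v)) / (exp (r * v) - 1) := by
    rw [twistedHypDeriv₂]
    ring_nf
  have hle := mul_le_mul_of_nonneg_right (exp_mul_sub_one_le hr₀.le hr₁ v)
    (div_nonneg (sub_nonneg.2 ((mul_comm _ _).trans_le hR')) hE.le)
  rw [mul_div_cancel₀ _ hE.ne', ← hR''] at hle
  linarith

end Dilation

section Difference

variable {a₀ b₀ a₁ b₁ m r y C : ℝ}

lemma mul_twistedHyp_sub_lt (ha₀ : 0 < a₀) (hb₀ : 0 < b₀) (ha₁ : 0 < a₁) (hb₁ : 0 < b₁)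
    (hab : a₀ + b₀ = a₁ + b₁) (hm : 0 < m) (hr₀ : 0 < r) (hr₁ : r ≤ 1) (hy : 0 < y) (hyC : y ≤ C)
    (hcurv : y * (a₁ * b₁ - m * (a₁ + b₁)) ≤ C * (r * (a₀ * b₀)))
    (hgrowth : 0 < a₁ * b₁ - m * (a₁ + b₁) - r * (a₀ * b₀) →
      (a₁ * b₁ - m * (a₁ + b₁) - r * (a₀ * b₀)) * (a₁ * b₁ / (a₁ + b₁) - m) ≤ m ^ 2)
    {v : ℝ} (hv : 0 < v) :
    r * (a₀ * b₀) * (C * twistedHyp a₀ b₀ 0 (r * v) - y * twistedHyp a₁ b₁ m v - (C - y)) <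
      (exp v - 1) *
          (C * (r ^ 2 * twistedHypDeriv₂ a₀ b₀ 0 (r * v)) - y * twistedHypDeriv₂ a₁ b₁ m v) +
        (a₁ + b₁ + 2 * m * (exp v - 1)) *
          (C * (r * twistedHypDeriv a₀ b₀ 0 (r * v)) - y * twistedHypDeriv a₁ b₁ m v) := by
  have hC : 0 < C := hy.trans_le hyC
  have hE : 0 < exp v - 1 := sub_pos.2 (one_lt_exp_iff.2 hv)
  have hdilation := mul_le_mul_of_nonneg_left (mul_twistedHyp_dilation_le ha₀ hb₀ hr₀ hr₁ hv)
    (mul_pos hC hr₀).le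
  rw [hab] at hdilation
  have hode : (exp v - 1) * twistedHypDeriv₂ a₁ b₁ m v = _ := mul_div_cancel₀ _ hE.ne'
  have hfriction : 0 < 2 * m * (exp v - 1) * (C * (r * twistedHypDeriv a₀ b₀ 0 (r * v))) := by
    have := twistedHypDeriv_untwisted_pos ha₀ hb₀ (mul_pos hr₀ hv).le
    positivity
  have hbound := mul_le_mul_of_nonneg_left (sub_mul_twistedHyp_le_max ha₁ hb₁ hgrowth hv.le) hy.le
  have hmax : y * max (a₁ * b₁ - m * (a₁ + b₁) - r * (a₀ * b₀)) 0 ≤ r * (a₀ * b₀) * (C - y) := by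
    rw [mul_max_of_nonneg _ _ hy.le, mul_zero, max_le_iff]
    exact ⟨by linarith, mul_nonneg (by positivity) (sub_nonneg.2 hyC)⟩
  linear_combination hdilation + hfriction + hbound + hmax + y * hode

lemma strictMonoOn_twistedHyp_sub (ha₀ : 0 < a₀) (hb₀ : 0 < b₀) (ha₁ : 0 < a₁) (hb₁ : 0 < b₁)
    (hab : a₀ + b₀ = a₁ + b₁) (hm : 0 < m) (hr₀ : 0 < r) (hr₁ : r ≤ 1)
    (hr : r * (a₀ * b₀) ≤ a₁ + b₁) (hy : 0 < y) (hyC : y ≤ C)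
    (hcurv : y * (a₁ * b₁ - m * (a₁ + b₁)) ≤ C * (r * (a₀ * b₀)))
    (hgrowth : 0 < a₁ * b₁ - m * (a₁ + b₁) - r * (a₀ * b₀) →
      (a₁ * b₁ - m * (a₁ + b₁) - r * (a₀ * b₀)) * (a₁ * b₁ / (a₁ + b₁) - m) ≤ m ^ 2) :
    StrictMonoOn (fun v => C * twistedHyp a₀ b₀ 0 (r * v) - y * twistedHyp a₁ b₁ m v) (Ici 0) := by
  have hS₀ := add_pos ha₀ hb₀
  have hS₁ := add_pos ha₁ hb₁
  have hdil (v : ℝ) : HasDerivAt (fun v => r * v) r v := by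
    simpa using (hasDerivAt_id v).const_mul r
  have hD {v : ℝ} (hv : 0 ≤ v) : HasDerivAt
      (fun v => C * twistedHyp a₀ b₀ 0 (r * v) - y * twistedHyp a₁ b₁ m v)
      (C * (r * twistedHypDeriv a₀ b₀ 0 (r * v)) - y * twistedHypDeriv a₁ b₁ m v) v := by
    refine ((((hasDerivAt_twistedHyp 0 hS₀ (mul_nonneg hr₀.le hv)).comp v (hdil v)).const_mul
      C).sub ((hasDerivAt_twistedHyp m hS₁ hv).const_mul y)).congr_deriv ?_
    ring
  have hD' {v : ℝ} (hv : 0 < v) : HasDerivAt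
      (fun v => C * (r * twistedHypDeriv a₀ b₀ 0 (r * v)) - y * twistedHypDeriv a₁ b₁ m v)
      (C * (r ^ 2 * twistedHypDeriv₂ a₀ b₀ 0 (r * v)) - y * twistedHypDeriv₂ a₁ b₁ m v) v := by
    refine (((((hasDerivAt_twistedHypDeriv 0 hS₀ (mul_pos hr₀ hv)).comp v (hdil v)).const_mul
      r).const_mul C).sub ((hasDerivAt_twistedHypDeriv m hS₁ hv).const_mul y)).congr_deriv ?_
    ring
  refine strictMonoOn_of_hasDerivWithinAt_pos (convex_Ici 0)
    (fun v hv => (hD hv).continuousAt.continuousWithinAt)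
    (fun v hv => (hD (interior_subset hv)).hasDerivWithinAt) fun v hv => ?_
  refine pos_of_mul_lt (I := fun v => C * twistedHyp a₀ b₀ 0 (r * v) - y * twistedHyp a₁ b₁ m v -
      (C - y)) (κ := r * (a₀ * b₀)) (by positivity) ?_ ?_ (fun v hv => (hD hv).sub_const (C - y))
    (fun v hv => ContinuousAt.continuousWithinAt ?_) (fun v hv => hD' hv)
    (fun v hv => (sub_pos.2 (one_lt_exp_iff.2 hv)).le) (fun v hv => ?_)
    (fun v hv => mul_twistedHyp_sub_lt ha₀ hb₀ ha₁ hb₁ hab hm hr₀ hr₁ hy hyC hcurv hgrowth hv)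
    (interior_Ici.subset hv)
  · simp [twistedHyp_zero]
  · rw [mul_zero, twistedHypDeriv_zero, twistedHypDeriv_zero, sub_nonneg, hab, sub_zero,
      ← mul_le_mul_iff_of_pos_right hS₁]
    field_simp
    linarith
  · exact ((((continuousAt_twistedHypDeriv a₀ b₀ 0 (mul_nonneg hr₀.le hv)).comp
      (hdil v).continuousAt).const_mul r).const_mul C).sub
      ((continuousAt_twistedHypDeriv a₁ b₁ m hv).const_mul y)
  · have : 0 ≤ 2 * m * (exp v - 1) := by
      have := one_le_exp hv.le
      positivity
    linarith

end Difference

section Convexity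

variable {A₀ B₀ A₁ B₁ p r : ℝ}

/-- The difference `F(A₁,B₁;p;1-x^d) - F(A₀,B₀;p;1-x^c)` as a function of `u = 1 - x^c`, where
`r = c / d`. -/
noncomputable def hypPowDiff (A₀ B₀ A₁ B₁ p r u : ℝ) : ℝ :=
  hyp A₁ B₁ p (1 - (1 - u) ^ r⁻¹) - hyp A₀ B₀ p u

/-- The derivative of `hypPowDiff` at `u = 1 - exp (-(r * v))`, up to the factor `p * r`. -/
noncomputable def hypPowDiffSlope (A₀ B₀ A₁ B₁ r v : ℝ) : ℝ :=
  -(r * (A₀ * B₀)) * twistedHyp (A₀ + 1) (B₀ + 1) 0 (r * v) -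
    -(A₁ * B₁) * twistedHyp (A₁ + 1) (B₁ + 1) (1 - r) v

lemma hypPowDiff_zero (A₀ B₀ A₁ B₁ p r : ℝ) : hypPowDiff A₀ B₀ A₁ B₁ p r 0 = 0 := by
  simp [hypPowDiff, hyp_zero]

lemma hypPowDiff_one (hp : 0 < p) (hp₀ : A₀ + B₀ + 1 = p) (hp₁ : A₁ + B₁ + 1 = p) (hr : r ≠ 0) :
    hypPowDiff A₀ B₀ A₁ B₁ p r 1 =
      1 / (p * betaFn (A₁ + 1) (B₁ + 1)) - 1 / (p * betaFn (A₀ + 1) (B₀ + 1)) := by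
  have h₀ := hyp_one_of_add_one (hp₀ ▸ hp)
  have h₁ := hyp_one_of_add_one (hp₁ ▸ hp)
  rw [hp₀] at h₀
  rw [hp₁] at h₁
  rw [hypPowDiff, sub_self, zero_rpow (inv_ne_zero hr), sub_zero, h₀, h₁]

lemma continuousOn_hypPowDiff (hp₀ : A₀ + B₀ + 1 = p) (hp₁ : A₁ + B₁ + 1 = p) (hr : 0 ≤ r) :
    ContinuousOn (hypPowDiff A₀ B₀ A₁ B₁ p r) (Icc 0 1) := by
  have hpow : Continuous fun u : ℝ => 1 - (1 - u) ^ r⁻¹ :=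
    continuous_const.sub ((continuous_const.sub continuous_id).rpow_const
      fun _ => Or.inr (inv_nonneg.2 hr))
  refine ((continuousOn_hyp_Icc (by linarith)).comp hpow.continuousOn fun u hu => ?_).sub
    (continuousOn_hyp_Icc (by linarith))
  have hu' : 0 ≤ 1 - u := sub_nonneg.2 hu.2
  exact ⟨sub_nonneg.2 (rpow_le_one hu' (sub_le_self 1 hu.1) (inv_nonneg.2 hr)),
    sub_le_self 1 (rpow_nonneg hu' _)⟩

lemma hasDerivAt_hypPowDiff (hp₀ : A₀ + B₀ + 1 = p) (hp₁ : A₁ + B₁ + 1 = p) (hr : 0 < r) {v : ℝ}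
    (hv : 0 ≤ v) :
    HasDerivAt (hypPowDiff A₀ B₀ A₁ B₁ p r) ((p * r)⁻¹ * hypPowDiffSlope A₀ B₀ A₁ B₁ r v)
      (1 - exp (-(r * v))) := by
  have hpow : (1 - (1 - exp (-(r * v)))) ^ r⁻¹ = exp (-v) := by
    rw [sub_sub_cancel, ← exp_mul]
    field_simp
  have hpow' : (1 - (1 - exp (-(r * v)))) ^ (r⁻¹ - 1) = exp (-((1 - r) * v)) := by
    rw [sub_sub_cancel, ← exp_mul]
    congr 1
    field_simp
  have hinner : HasDerivAt (fun u : ℝ => 1 - (1 - u) ^ r⁻¹) (r⁻¹ * exp (-((1 - r) * v)))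
      (1 - exp (-(r * v))) := by
    rw [← hpow']
    refine ((((hasDerivAt_id _).const_sub 1).rpow_const (Or.inl ?_)).const_sub 1).congr_deriv ?_
    · simp [(exp_pos _).ne']
    · simp
  have h₁ := hasDerivAt_hyp A₁ B₁ p (abs_one_sub_exp_neg_lt_one hv)
  have h₀ := hasDerivAt_hyp A₀ B₀ p (abs_one_sub_exp_neg_lt_one (mul_nonneg hr.le hv))
  rw [← hpow] at h₁
  refine ((HasDerivAt.comp _ (h := fun u => 1 - (1 - u) ^ r⁻¹) h₁ hinner).sub h₀).congr_deriv ?_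
  rw [hpow, hypPowDiffSlope, twistedHyp, twistedHyp,
    show A₀ + 1 + (B₀ + 1) = p + 1 by linarith, show A₁ + 1 + (B₁ + 1) = p + 1 by linarith]
  simp only [zero_mul, neg_zero, exp_zero]
  field_simp
  ring

lemma strictConvexOn_hypPowDiff (hp : 0 < p) (hp₀ : A₀ + B₀ + 1 = p) (hp₁ : A₁ + B₁ + 1 = p)
    (hr : 0 < r) (hmono : StrictMonoOn (hypPowDiffSlope A₀ B₀ A₁ B₁ r) (Ici 0)) :
    StrictConvexOn ℝ (Icc 0 1) (hypPowDiff A₀ B₀ A₁ B₁ p r) := by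
  refine StrictMonoOn.strictConvexOn_of_deriv (convex_Icc 0 1)
    (continuousOn_hypPowDiff hp₀ hp₁ hr.le) ?_
  rw [interior_Icc]
  have hlog {u : ℝ} (hu : u < 1) : 1 - exp (-(r * (-log (1 - u) / r))) = u := by
    rw [mul_div_cancel₀ _ hr.ne', neg_neg, exp_log (sub_pos.2 hu), sub_sub_cancel]
  have hv {u : ℝ} (hu : u ∈ Ioo 0 1) : 0 ≤ -log (1 - u) / r :=
    div_nonneg (neg_nonneg.2 (log_nonpos (sub_pos.2 hu.2).le (sub_le_self 1 hu.1.le))) hr.le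
  have hderiv {u : ℝ} (hu : u ∈ Ioo 0 1) : deriv (hypPowDiff A₀ B₀ A₁ B₁ p r) u =
      (p * r)⁻¹ * hypPowDiffSlope A₀ B₀ A₁ B₁ r (-log (1 - u) / r) := by
    simpa only [hlog hu.2] using (hasDerivAt_hypPowDiff hp₀ hp₁ hr (hv hu)).deriv
  intro s hs t ht hst
  rw [hderiv hs, hderiv ht]
  have := hmono (hv hs) (hv ht) (by
    have := log_lt_log (sub_pos.2 ht.2) (sub_lt_sub_left hst 1)
    gcongr)
  gcongr

lemma hypPowDiff_mem_Ioo (hp : 0 < p) (hp₀ : A₀ + B₀ + 1 = p) (hp₁ : A₁ + B₁ + 1 = p)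
    (hr : 0 < r) (hmono : StrictMonoOn (hypPowDiffSlope A₀ B₀ A₁ B₁ r) (Ici 0)) {u : ℝ}
    (hu : u ∈ Ioo 0 1) :
    hypPowDiff A₀ B₀ A₁ B₁ p r u ∈ Ioo ((p * r)⁻¹ * (A₁ * B₁ - r * (A₀ * B₀)) * u)
      ((1 / (p * betaFn (A₁ + 1) (B₁ + 1)) - 1 / (p * betaFn (A₀ + 1) (B₀ + 1))) * u) := by
  have hconv := strictConvexOn_hypPowDiff hp hp₀ hp₁ hr hmono
  have h₀ : (0 : ℝ) ∈ Icc 0 1 := left_mem_Icc.2 zero_le_one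
  constructor
  · have htangent : HasDerivAt (hypPowDiff A₀ B₀ A₁ B₁ p r)
        ((p * r)⁻¹ * (A₁ * B₁ - r * (A₀ * B₀))) 0 := by
      have h := hasDerivAt_hypPowDiff (A₀ := A₀) (A₁ := A₁) hp₀ hp₁ hr le_rfl
      simp only [hypPowDiffSlope, mul_zero, neg_zero, exp_zero, sub_self, twistedHyp_zero] at h
      exact h.congr_deriv (by ring)
    have hslope := hconv.lt_slope_of_hasDerivAt h₀ (Ioo_subset_Icc_self hu) hu.1 htangent
    rwa [slope_def_field, hypPowDiff_zero, sub_zero, sub_zero, lt_div_iff₀ hu.1] at hslope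
  · have hchord := hconv.2 h₀ (right_mem_Icc.2 zero_le_one) zero_ne_one (sub_pos.2 hu.2) hu.1
      (sub_add_cancel 1 u)
    simpa [hypPowDiff_zero, hypPowDiff_one hp hp₀ hp₁ hr.ne', mul_comm u] using hchord

end Convexity

section Parameters

variable {a b α β p r y δ : ℝ}

lemma ratio_lt_one (hβ : 0 < β) (hp : 0 < p) (hrk : r * (β * (p + 1) + p) ≤ β + p) : r < 1 := by
  have hk : 0 < β * (p + 1) + p := by positivity
  refine lt_of_mul_lt_mul_right (hrk.trans_lt ?_) hk.le
  linarith [mul_pos hβ hp]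

lemma mul_sub_le_of_le_of_le (hp : p = α + β) (hr : r ≤ 1) (hβα : r * β ≤ r * α) (hy : 0 ≤ y)
    (hyβ : y ≤ r * β) : y * (r * (p + 1) - 1 - y) ≤ r * β * (r * α) := by
  have hT : r * (p + 1) - 1 ≤ r * α + r * β := by rw [hp]; linarith
  calc y * (r * (p + 1) - 1 - y) ≤ y * (r * α + r * β - y) := by gcongr
    _ = r * β * (r * α) - (r * α - y) * (r * β - y) := by ring
    _ ≤ r * β * (r * α) :=
      sub_le_self _ (mul_nonneg (sub_nonneg.2 (hyβ.trans hβα)) (sub_nonneg.2 hyβ))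

lemma mul_sub_le_of_pow_four_le (hα : 0 ≤ α) (hβ : 0 < β) (hp : 0 < p) (hr : 0 ≤ r)
    (hrk : r * (β * (p + 1) + p) ≤ β + p) (hy : 0 ≤ y)
    (hquartic : p ^ 4 ≤ 4 * (α * β * (p + β)) * (β + p)) :
    y * (r * (p + 1) - 1 - y) ≤ r * β * (r * α) := by
  rcases le_or_gt (r * (p + 1) - 1) 0 with hT | hT
  · exact (mul_nonpos_of_nonneg_of_nonpos hy (by linarith)).trans (by positivity)
  have hle : (r * (p + 1) - 1) * (p + β) ≤ r * p ^ 2 := by linarith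
  have hsq : 4 * (y * (r * (p + 1) - 1 - y)) ≤ (r * (p + 1) - 1) ^ 2 := by
    linarith [sq_nonneg (r * (p + 1) - 1 - 2 * y)]
  refine le_of_mul_le_mul_right (?_ : _ * (4 * (p + β) ^ 2) ≤ _) (by positivity)
  calc y * (r * (p + 1) - 1 - y) * (4 * (p + β) ^ 2)
      = 4 * (y * (r * (p + 1) - 1 - y)) * (p + β) ^ 2 := by ring
    _ ≤ (r * (p + 1) - 1) ^ 2 * (p + β) ^ 2 := by gcongr
    _ = ((r * (p + 1) - 1) * (p + β)) ^ 2 := by ring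
    _ ≤ (r * p ^ 2) ^ 2 := by gcongr
    _ = r ^ 2 * p ^ 4 := by ring
    _ ≤ r ^ 2 * (4 * (α * β * (p + β)) * (β + p)) := by gcongr
    _ = r * β * (r * α) * (4 * (p + β) ^ 2) := by ring

lemma sub_mul_le_sq_of_ratio_le (hα : 0 ≤ α) (hβ : 0 < β) (hp : p = α + β) (hr : 0 ≤ r)
    (hrk : r * (β * (p + 1) + p) ≤ β + p) (hy : 0 ≤ y)
    (he : 0 ≤ r * (p + 1) - 1 - y - r * α) :
    (r * (p + 1) - 1 - y - r * α) * (r * (p + 1) - 1 - y) ≤ (1 - r) ^ 2 := by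
  have hp₀ : 0 < p := by linarith
  have hθ : 0 ≤ r * (p + 1) - 1 - y := he.trans (sub_le_self _ (by positivity))
  have hm : β * p ≤ (β * (p + 1) + p) * (1 - r) := by linarith
  have hky : 0 ≤ (β * (p + 1) + p) * y := by positivity
  have hke : (β * (p + 1) + p) * (r * (p + 1) - 1 - y - r * α) ≤ β ^ 2 := by
    have := mul_le_mul_of_nonneg_right hrk (by positivity : 0 ≤ 1 + β)
    rw [hp] at this hky ⊢
    linarith
  have hkθ : (β * (p + 1) + p) * (r * (p + 1) - 1 - y) ≤ p ^ 2 := by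
    have := mul_le_mul_of_nonneg_right hrk (by positivity : 0 ≤ p + 1)
    linarith
  refine le_of_mul_le_mul_left (?_ : (β * (p + 1) + p) ^ 2 * _ ≤ _) (by positivity)
  calc (β * (p + 1) + p) ^ 2 * ((r * (p + 1) - 1 - y - r * α) * (r * (p + 1) - 1 - y))
      = ((β * (p + 1) + p) * (r * (p + 1) - 1 - y - r * α)) *
          ((β * (p + 1) + p) * (r * (p + 1) - 1 - y)) := by ring
    _ ≤ β ^ 2 * p ^ 2 := by gcongr
    _ = (β * p) ^ 2 := by ring
    _ ≤ ((β * (p + 1) + p) * (1 - r)) ^ 2 := by gcongr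
    _ = (β * (p + 1) + p) ^ 2 * (1 - r) ^ 2 := by ring

lemma mul_add_le_of_le_quadratic_root (hr : 0 ≤ r) (hβ : 0 ≤ b * (1 - a))
    (hδ₀ : 0 ≤ 2 * δ + (b + 1 - a))
    (hδ : δ ≤ (a - b - 1 + √((a + b - 1) ^ 2 + 4 * (b * (1 - a)) * r)) / 2) :
    (1 - a + δ) * (b + δ) ≤ r * (b * (1 - a)) := by
  have hroot : 2 * δ + (b + 1 - a) ≤ √((a + b - 1) ^ 2 + 4 * (b * (1 - a)) * r) := by linarith
  rw [le_sqrt hδ₀ (by positivity)] at hroot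
  linarith

lemma neg_of_mul_add_lt (ha : a ≤ 1) (hb : 0 ≤ b) (h : (1 - a + δ) * (b + δ) < b * (1 - a)) :
    δ < 0 := by
  contrapose! h
  rw [mul_comm b]
  gcongr <;> linarith

end Parameters

lemma strictMonoOn_hypPowDiffSlope {A₀ B₀ A₁ B₁ α β p r : ℝ} (hA₀ : -1 < A₀) (hB₀ : -1 < B₀)
    (hA₁ : -1 < A₁) (hB₁ : -1 < B₁) (hp₀ : A₀ + B₀ + 1 = p) (hp₁ : A₁ + B₁ + 1 = p)
    (hα : α = (A₀ + 1) * (B₀ + 1)) (hβ : β = -(A₀ * B₀)) (hβ₀ : 0 < β) (hy : 0 < -(A₁ * B₁))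
    (hr : 0 < r) (hyβ : -(A₁ * B₁) ≤ r * β) (hrk : r * (β * (p + 1) + p) ≤ β + p)
    (hcase : β ≤ α ∨ p ^ 4 ≤ 4 * (α * β * (p + β)) * (β + p)) :
    StrictMonoOn (hypPowDiffSlope A₀ B₀ A₁ B₁ r) (Ici 0) := by
  have hα₀ : 0 < α := hα ▸ mul_pos (by linarith) (by linarith)
  have hpαβ : p = α + β := by rw [hα, hβ, ← hp₀]; ring
  have hp : 0 < p := by linarith
  have hr₁ : r < 1 := ratio_lt_one hβ₀ hp hrk
  have hS : A₁ + 1 + (B₁ + 1) = p + 1 := by linarith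
  have hθ : (A₁ + 1) * (B₁ + 1) - (1 - r) * (p + 1) = r * (p + 1) - 1 - -(A₁ * B₁) := by
    rw [← hp₁]; ring
  have hC : -(r * (A₀ * B₀)) = r * β := by rw [hβ]; ring
  unfold hypPowDiffSlope
  rw [hC]
  refine strictMonoOn_twistedHyp_sub (by linarith) (by linarith) (by linarith) (by linarith)
    (by linarith) (sub_pos.2 hr₁) hr hr₁.le ?_ hy hyβ ?_ ?_
  · rw [← hα, hS]
    linarith [mul_le_mul_of_nonneg_right hr₁.le hα₀.le]
  · rw [hS, hθ, ← hα]
    rcases hcase with hβα | hquartic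
    · exact mul_sub_le_of_le_of_le hpαβ hr₁.le (by gcongr) hy.le hyβ
    · exact mul_sub_le_of_pow_four_le hα₀.le hβ₀ hp hr.le hrk hy.le hquartic
  · rw [hS, hθ, ← hα]
    intro he
    have hsq := sub_mul_le_sq_of_ratio_le hα₀.le hβ₀ hpαβ hr.le hrk hy.le he.le
    have hrate : (A₁ + 1) * (B₁ + 1) / (p + 1) - (1 - r) ≤ r * (p + 1) - 1 - -(A₁ * B₁) := by
      rw [← hθ, div_sub' (by positivity), mul_comm (p + 1)]
      refine div_le_self ?_ (by linarith)
      rw [hθ]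
      linarith [mul_pos hr hα₀]
    exact (mul_le_mul_of_nonneg_left hrate he.le).trans hsq

lemma hypPowDiff_sub_one_mem_Ioo {a b α β p r δ u : ℝ} (ha : a ∈ Ioo 0 1) (hb : 0 < b)
    (hα : α = a * (b + 1)) (hβ : β = b * (1 - a)) (hp : p = a + b)
    (hcase : β ≤ α ∨ p ^ 4 ≤ 4 * (α * β * (p + β)) * (β + p)) (hr : 0 < r)
    (hrk : r * (β * (p + 1) + p) ≤ β + p) (hδa : a - 1 < δ) (hδb : -b < δ)
    (hδ : (1 - a + δ) * (b + δ) ≤ r * β) (hu : u ∈ Ioo 0 1) :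
    hypPowDiff (a - 1) b (a - 1 - δ) (b + δ) p r u ∈
      Ioo ((p * r)⁻¹ * ((r - 1) * β + (a - b - 1) * δ - δ ^ 2) * u)
        ((1 / (p * betaFn (a - δ) (b + 1 + δ)) - 1 / (p * betaFn a (b + 1))) * u) := by
  have hp₀ : 0 < p := by linarith [ha.1]
  have hβ₀ : 0 < β := hβ ▸ mul_pos hb (sub_pos.2 ha.2)
  have hδ₀ : δ < 0 := neg_of_mul_add_lt ha.2.le hb.le <| hβ ▸ hδ.trans_lt
    (mul_lt_of_lt_one_left hβ₀ (ratio_lt_one hβ₀ hp₀ hrk))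
  have hy₀ : 0 < (1 - a + δ) * (b + δ) := mul_pos (by linarith) (by linarith)
  have hmono : StrictMonoOn (hypPowDiffSlope (a - 1) b (a - 1 - δ) (b + δ) r) (Ici 0) :=
    strictMonoOn_hypPowDiffSlope (by linarith [ha.1]) (by linarith) (by linarith [ha.1])
      (by linarith) (by linarith) (by linarith) (by linarith) (by linarith) hβ₀ (by linarith) hr
      (by linarith) hrk hcase
  have hmem := hypPowDiff_mem_Ioo hp₀ (by linarith) (by linarith) hr hmono hu
  have htangent : (a - 1 - δ) * (b + δ) - r * ((a - 1) * b) =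
      (r - 1) * β + (a - b - 1) * δ - δ ^ 2 := by
    rw [hβ]
    ring
  rwa [htangent, sub_add_cancel, add_right_comm b, sub_right_comm a 1 δ, sub_add_cancel,
    ← sub_right_comm a 1 δ] at hmem

theorem stmt1_general (a b c d δ₁ α β p h k : ℝ)
    (ha : a ∈ Ioo (0 : ℝ) 1) (hb : 0 < b)
    (hα : α = a * (b + 1)) (hβ : β = b * (1 - a)) (hp : p = a + b)
    (hh : h = α * β * (p + β)) (hk : k = β * (p + 1) + p)
    (hcase : β ≤ α ∨ p ^ 4 ≤ 4 * h * (β + p))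
    (hc : 0 < c) (hd : 0 < d) (hcd : c / d ≤ (β + p) / k)
    (hδ₁ : δ₁ = ((a - b - 1) + √((p - 1) ^ 2 + 4 * β * (c / d))) / 2) :
    ∀ x ∈ Ioo (0 : ℝ) 1, ∀ δ ∈ Ioc (max (a - 1) (-b)) δ₁,
      hyp (a - 1) b p (1 - x ^ c) +
          (d / (p * c) * ((c / d - 1) * β + (a - b - 1) * δ - δ ^ 2)) * (1 - x ^ c)
        < hyp (a - 1 - δ) (b + δ) p (1 - x ^ d) ∧
      hyp (a - 1 - δ) (b + δ) p (1 - x ^ d)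
        < hyp (a - 1) b p (1 - x ^ c) +
            (1 / (p * betaFn (a - δ) (b + 1 + δ)) - 1 / (p * betaFn a (b + 1))) * (1 - x ^ c) := by
  rintro x ⟨hx₀, hx₁⟩ δ ⟨hδ, hδδ₁⟩
  obtain ⟨hδa, hδb⟩ := max_lt_iff.1 hδ
  have hβ₀ : 0 < β := hβ ▸ mul_pos hb (sub_pos.2 ha.2)
  have hp₀ : 0 < p := by linarith [ha.1]
  have hr : 0 < c / d := div_pos hc hd
  have hrk : c / d * (β * (p + 1) + p) ≤ β + p := by
    rwa [hk, le_div_iff₀ (by positivity)] at hcd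
  have hroot : (1 - a + δ) * (b + δ) ≤ c / d * β := by
    subst hβ hp
    exact mul_add_le_of_le_quadratic_root hr.le hβ₀.le (by linarith) (hδδ₁.trans_eq hδ₁)
  obtain ⟨htangent, hchord⟩ := hypPowDiff_sub_one_mem_Ioo ha hb hα hβ hp (hh ▸ hcase) hr hrk hδa
    hδb hroot (u := 1 - x ^ c)
    ⟨sub_pos.2 (rpow_lt_one hx₀.le hx₁ hc), sub_lt_self 1 (rpow_pos_of_pos hx₀ c)⟩
  have hpow : (1 - (1 - x ^ c)) ^ (c / d)⁻¹ = x ^ d := by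
    rw [sub_sub_cancel, ← rpow_mul hx₀.le, inv_div, mul_div_cancel₀ d hc.ne']
  have hfactor : (p * (c / d))⁻¹ = d / (p * c) := by rw [← mul_div_assoc, inv_div]
  rw [hypPowDiff, hpow] at htangent hchord
  rw [hfactor] at htangent
  exact ⟨by linarith, by linarith⟩

theorem stmt1 (a b c d δ₁ α β p h k : ℝ)
    (ha : a ∈ Ioo (0:ℝ) 1) (hb : 1 - a ≤ b)
    (hα : α = a * (b + 1)) (hβ : β = b * (1 - a)) (hp : p = a + b)
    (hh : h = α * β * (p + β)) (hk : k = β * (p + 1) + p)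
    (hcase : α ≥ Real.sqrt 3 * β ∨ (α < Real.sqrt 3 * β ∧ 4 * h * (β + p) ≥ p ^ 4))
    (hc : 0 < c) (hd : 0 < d) (hcd : c / d ≤ (β + p) / k)
    (hδ₁ : δ₁ = ((a - b - 1) + Real.sqrt ((p - 1) ^ 2 + 4 * β * (c / d))) / 2) :
    ∀ x ∈ Ioo (0:ℝ) 1, ∀ δ ∈ Ioc (a - 1) δ₁,
      hyp (a - 1) b p (1 - x ^ c) +
          (d / (p * c) * ((c / d - 1) * β + (a - b - 1) * δ - δ ^ 2)) * (1 - x ^ c)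
        < hyp (a - 1 - δ) (b + δ) p (1 - x ^ d) ∧
      hyp (a - 1 - δ) (b + δ) p (1 - x ^ d)
        < hyp (a - 1) b p (1 - x ^ c) +
            (1 / (p * betaFn (a - δ) (b + 1 + δ)) - 1 / (p * betaFn a (b + 1))) * (1 - x ^ c) := by
  have hβ₀ : 0 ≤ β := hβ ▸ mul_nonneg (by linarith [ha.2]) (sub_nonneg.2 ha.2.le)
  have hcase' : β ≤ α ∨ p ^ 4 ≤ 4 * h * (β + p) := hcase.imp
    (le_mul_of_one_le_left hβ₀ (one_le_sqrt.2 (by norm_num))).trans And.right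
  exact fun x hx δ hδ => stmt1_general a b c d δ₁ α β p h k ha (by linarith [ha.2]) hα hβ hp hh hk
    hcase' hc hd hcd hδ₁ x hx δ ⟨max_lt hδ.1 (by linarith [hδ.1]), hδ.2⟩
end

section
/- Assume a ∈ (0,1), b ≥ 1−a, and that α, β, p, h satisfy either α ≥ √3·β, or (α < √3·β and 4h(β+p) ≥ p⁴). If c, d > 0 with 0 < c/d ≤ (β+p)/k, then sup{ δ ∈ (a−1, 0) : F(a−1, b; a+b; 1−x^c) < F(a−1−δ, b+δ; a+b; 1−x^d) for all x ∈ (0,1) } = [(a−b−1) + √((p−1)² + 4β(c/d))]/2. -/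
open Real Set Filter Topology

/-!
Put `s = -log x` and `r = c / d`. Powers of `x` become dilations of `s`, and the inequality compares
`ψ (r * s)` with `φ s`, where `φ s = F(A, B; C; 1 - e⁻ˢ)` and `ψ s = F(A', B'; C; 1 - e⁻ˢ)` for
`A = a - 1 - δ`, `B = b + δ`, `A' = a - 1`, `B' = b`, `C = a + b`. Both pairs of upper parameters
add up to `C - 1`, so Euler's equation makes the decay rate `u = -φ' / φ` a solution of
`u' = u² - u + (-A B - C u) / (eˢ - 1)`, and likewise for the decay rate `v` of `ψ`.

If `r A' B' < A B`, then `u s < r v (r s)` at `s = 0`, and where the two sides meet the Riccati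
equations and `1 / (eˢ - 1) ≤ r / (eʳˢ - 1)` show that `r v (r s) - u s` is strictly increasing.
Hence they never meet, and integration gives `ψ (r s) < φ s` for all `s > 0`. Conversely, comparing
derivatives at `s = 0` gives `r A' B' ≤ A B`. Thus the supremum is the larger root `δ` of the
quadratic equation `(a - 1 - δ) (b + δ) = r (a - 1) b`.
-/

section PowerSeries

lemma hasSum_deriv_of_hasFPowerSeriesOnBall {𝕜 E : Type*} [NontriviallyNormedField 𝕜]
    [NormedAddCommGroup E] [NormedSpace 𝕜 E] [CompleteSpace E] {f : 𝕜 → E}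
    {p : FormalMultilinearSeries 𝕜 𝕜 E} {r : ENNReal} {y : 𝕜} (h : HasFPowerSeriesOnBall f p 0 r)
    (hy : y ∈ Metric.eball 0 r) :
    HasSum (fun n : ℕ => y ^ n • (n + 1) • p.coeff (n + 1)) (deriv f y) := by
  simpa [Function.comp_def] using (h.fderiv.hasSum hy).map
    (ContinuousLinearMap.apply 𝕜 E (1 : 𝕜)) (ContinuousLinearMap.apply 𝕜 E (1 : 𝕜)).continuous

lemma mem_eball_zero_one_iff {E : Type*} [SeminormedAddCommGroup E] {x : E} :
    x ∈ Metric.eball 0 1 ↔ ‖x‖ < 1 := by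
  simp [← ENNReal.ofReal_one, Metric.eball_ofReal]

lemma hasSum_natCast_mul_pow {K : Type*} [NormedField K] {e : ℕ → K} {y s : K}
    (h : HasSum (fun n : ℕ => (n + 1) * e (n + 1) * y ^ n) s) :
    HasSum (fun n : ℕ => n * e n * y ^ n) (y * s) := by
  rw [← hasSum_nat_add_iff' 1]
  simpa [pow_succ, mul_comm, mul_left_comm, mul_assoc] using h.mul_left y

end PowerSeries

section Hypergeometric

variable {𝕂 : Type*} [RCLike 𝕂] {a b c y : 𝕂}

lemma one_le_ordinaryHypergeometricSeries_radius (a b c : 𝕂) :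
    1 ≤ (ordinaryHypergeometricSeries 𝕂 a b c).radius := by
  by_cases habc : ∀ k : ℕ, ↑k ≠ -a ∧ ↑k ≠ -b ∧ ↑k ≠ -c
  · exact (ordinaryHypergeometricSeries_radius_eq_one 𝕂 a b c habc).ge
  · obtain ⟨k, rfl | rfl | rfl⟩ : ∃ k : ℕ, a = -k ∨ b = -k ∨ c = -k := by
      simpa only [not_forall, not_and_or, not_not, eq_neg_iff_add_eq_zero, ne_eq, add_comm]
        using habc
    · simp [ordinaryHypergeometric_radius_top_of_neg_nat₁]
    · simp [ordinaryHypergeometric_radius_top_of_neg_nat₂]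
    · simp [ordinaryHypergeometric_radius_top_of_neg_nat₃]

lemma hasFPowerSeriesOnBall_ordinaryHypergeometric (a b c : 𝕂) :
    HasFPowerSeriesOnBall (₂F₁ a b c) (ordinaryHypergeometricSeries 𝕂 a b c) 0 1 :=
  ((ordinaryHypergeometricSeries 𝕂 a b c).hasFPowerSeriesOnBall
    (one_pos.trans_le (one_le_ordinaryHypergeometricSeries_radius a b c))).mono one_pos
    (one_le_ordinaryHypergeometricSeries_radius a b c)

lemma hasSum_ordinaryHypergeometric (a b c : 𝕂) (hy : ‖y‖ < 1) :
    HasSum (fun n => ordinaryHypergeometricCoefficient a b c n * y ^ n) (₂F₁ a b c y) := by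
  have h := (hasFPowerSeriesOnBall_ordinaryHypergeometric a b c).hasSum
    (mem_eball_zero_one_iff.2 hy)
  simpa only [ordinaryHypergeometricSeries_apply_eq, smul_eq_mul, zero_add] using h

lemma eval_ascPochhammer_succ_left {S : Type*} [CommSemiring S] (n : ℕ) (x : S) :
    (ascPochhammer S (n + 1)).eval x = x * (ascPochhammer S n).eval (x + 1) := by
  simp [ascPochhammer_succ_left, Polynomial.eval_comp]

lemma succ_mul_ordinaryHypergeometricCoefficient_succ (a b c : 𝕂) (n : ℕ) :
    (n + 1) * ordinaryHypergeometricCoefficient a b c (n + 1) =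
      a * b / c * ordinaryHypergeometricCoefficient (a + 1) (b + 1) (c + 1) n := by
  simp only [ordinaryHypergeometricCoefficient, eval_ascPochhammer_succ_left, Nat.factorial_succ,
    Nat.cast_mul, mul_inv]
  have : (n : 𝕂) + 1 ≠ 0 := n.cast_add_one_ne_zero
  push_cast
  field_simp

lemma hasDerivAt_ordinaryHypergeometric (a b c : 𝕂) (hy : ‖y‖ < 1) :
    HasDerivAt (₂F₁ a b c) (a * b / c * ₂F₁ (a + 1) (b + 1) (c + 1) y) y := by
  have hF := hasFPowerSeriesOnBall_ordinaryHypergeometric a b c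
  have hy' := mem_eball_zero_one_iff.2 hy
  have hsum := hasSum_deriv_of_hasFPowerSeriesOnBall hF hy'
  have hsum' := (hasSum_ordinaryHypergeometric (a + 1) (b + 1) (c + 1) hy).mul_left (a * b / c)
  have hderiv : deriv (₂F₁ a b c) y = a * b / c * ₂F₁ (a + 1) (b + 1) (c + 1) y := by
    refine hsum.unique (hsum'.congr_fun fun n => ?_)
    rw [ordinaryHypergeometricSeries, FormalMultilinearSeries.coeff_ofScalars, smul_eq_mul,
      nsmul_eq_mul]
    push_cast
    linear_combination y ^ n * succ_mul_ordinaryHypergeometricCoefficient_succ a b c n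
  rw [← hderiv]
  exact (hF.differentiableOn.differentiableAt (Metric.isOpen_eball.mem_nhds hy')).hasDerivAt

lemma mul_ordinaryHypergeometricCoefficient_succ (a b : 𝕂) {n : ℕ} (hc : c ≠ 0)
    (hcn : c + 1 + n ≠ 0) : c * ordinaryHypergeometricCoefficient a b c (n + 1) =
      (c + 1 + n) * ordinaryHypergeometricCoefficient (a + 1) (b + 1) (c + 1) (n + 1) -
        (a + b + 1 + n) * ordinaryHypergeometricCoefficient (a + 1) (b + 1) (c + 1) n := by
  have hn : (n : 𝕂) + 1 ≠ 0 := n.cast_add_one_ne_zero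
  have hn' : (n.factorial : 𝕂) ≠ 0 := mod_cast n.factorial_ne_zero
  unfold ordinaryHypergeometricCoefficient
  rw [eval_ascPochhammer_succ_left n a, eval_ascPochhammer_succ_left n b,
    eval_ascPochhammer_succ_left n c, ascPochhammer_succ_eval n (a + 1),
    ascPochhammer_succ_eval n (b + 1), ascPochhammer_succ_eval n (c + 1), Nat.factorial_succ,
    mul_inv, mul_inv]
  push_cast
  generalize ((ascPochhammer 𝕂 n).eval (c + 1))⁻¹ = C
  field_simp
  ring

-- This is Euler's hypergeometric equation, with the derivatives of `₂F₁ a b c` expressed through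
-- the functions with raised parameters.
lemma ordinaryHypergeometric_contiguous (a b : 𝕂) (hc : ∀ n : ℕ, c + n ≠ 0) (hy : ‖y‖ < 1) :
    c * ₂F₁ a b c y = (c - (a + b + 1) * y) * ₂F₁ (a + 1) (b + 1) (c + 1) y +
      y * (1 - y) * ((a + 1) * (b + 1) / (c + 1) * ₂F₁ (a + 2) (b + 2) (c + 2) y) := by
  set f := ordinaryHypergeometricCoefficient a b c
  set e := ordinaryHypergeometricCoefficient (a + 1) (b + 1) (c + 1)
  have hF : HasSum (fun n => f n * y ^ n) _ := hasSum_ordinaryHypergeometric a b c hy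
  have hF₁ : HasSum (fun n => e n * y ^ n) _ :=
    hasSum_ordinaryHypergeometric (a + 1) (b + 1) (c + 1) hy
  have hF₂ : HasSum (fun n : ℕ => n * e n * y ^ n)
      (y * ((a + 1) * (b + 1) / (c + 1) * ₂F₁ (a + 2) (b + 2) (c + 2) y)) := by
    have hsum := (hasSum_ordinaryHypergeometric (a + 1 + 1) (b + 1 + 1) (c + 1 + 1) hy).mul_left
      ((a + 1) * (b + 1) / (c + 1))
    simp only [add_assoc, one_add_one_eq_two] at hsum
    refine hasSum_natCast_mul_pow (hsum.congr_fun fun n => ?_)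
    rw [succ_mul_ordinaryHypergeometricCoefficient_succ]
    simp only [add_assoc, one_add_one_eq_two]
    ring
  have hsum := ((hasSum_nat_add_iff' 1).2 ((hF₁.mul_left c).add hF₂)).sub
    (((hF₁.mul_left (a + b + 1)).add hF₂).mul_left y)
  have hsum' := ((hasSum_nat_add_iff' 1).2 hF).mul_left c
  have hcoeff (n : ℕ) := mul_ordinaryHypergeometricCoefficient_succ (n := n) a b
    (by simpa using hc 0) (by simpa [add_assoc, add_comm (1 : 𝕂)] using hc (n + 1))
  have h := hsum.unique (hsum'.congr_fun fun n => by
    push_cast; linear_combination -y ^ (n + 1) * hcoeff n)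
  simp only [Finset.range_one, ordinaryHypergeometricCoefficient, Finset.sum_singleton,
    Nat.factorial_zero, Nat.cast_one, inv_one, ascPochhammer_zero, Polynomial.eval_one, mul_one,
    pow_zero, Nat.cast_zero, add_zero, e, f] at h
  linear_combination -h

lemma ordinaryHypergeometric_pos {a b c y : ℝ} (ha : 0 < a) (hb : 0 < b) (hc : 0 < c) (hy0 : 0 ≤ y)
    (hy1 : y < 1) : 0 < ₂F₁ a b c y := by
  have hsum := hasSum_ordinaryHypergeometric a b c (y := y) (by rwa [norm_of_nonneg hy0])
  have hcoeff (n : ℕ) : 0 < ordinaryHypergeometricCoefficient a b c n := by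
    have := ascPochhammer_pos n a ha
    have := ascPochhammer_pos n b hb
    have := ascPochhammer_pos n c hc
    simp only [ordinaryHypergeometricCoefficient]
    positivity
  rw [← hsum.tsum_eq]
  exact hsum.summable.tsum_pos (fun n => mul_nonneg (hcoeff n).le (pow_nonneg hy0 n)) 0
    (by simp)

lemma hyp_eq_ordinaryHypergeometric (a b c : ℝ) : hyp a b c = ₂F₁ a b c := by
  have heval (n : ℕ) (x : ℝ) : ∏ i ∈ Finset.range n, (x + i) = (ascPochhammer ℝ n).eval x := by
    induction n with
    | zero => simp
    | succ n ih => rw [Finset.prod_range_succ, ih, ascPochhammer_succ_eval]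
  rw [ordinaryHypergeometric_eq_tsum]
  ext x
  refine tsum_congr fun n => ?_
  simp only [heval, smul_eq_mul]
  field_simp

end Hypergeometric

section RealAnalysis

lemma pos_of_deriv_pos_of_eq_zero {f : ℝ → ℝ} {x₀ x : ℝ}
    (hf : ∀ y, x₀ ≤ y → DifferentiableAt ℝ f y) (h₀ : 0 < f x₀)
    (hderiv : ∀ y, x₀ < y → f y = 0 → 0 < deriv f y) (hx : x₀ ≤ x) : 0 < f x := by
  have hderiv' {y : ℝ} (hy : x₀ ≤ y) (hfy : 0 = f y) : 0 < deriv f y := by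
    obtain rfl | hy := hy.eq_or_lt
    · exact absurd hfy h₀.ne
    · exact hderiv y hy hfy.symm
  have hnonneg {y : ℝ} (hy : x₀ ≤ y) : 0 ≤ f y :=
    image_le_of_deriv_right_lt_deriv_boundary' (f := fun _ => 0) (f' := fun _ => 0)
      continuousOn_const (fun z _ => hasDerivWithinAt_const z _ _) h₀.le
      (fun z hz => (hf z hz.1).continuousAt.continuousWithinAt)
      (fun z hz => (hf z hz.1).hasDerivAt.hasDerivWithinAt) (fun z hz => hderiv' hz.1)
      (right_mem_Icc.2 hy)
  refine (hnonneg hx).lt_of_ne fun hfx => (hderiv' hx hfx).ne' ?_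
  have hlt : x₀ < x := hx.lt_of_ne fun h => h₀.ne (h ▸ hfx)
  have hmin : IsLocalMin f x := by
    filter_upwards [lt_mem_nhds hlt] with y hy
    exact hfx ▸ hnonneg hy.le
  exact hmin.deriv_eq_zero

lemma inv_exp_sub_one_le {r s : ℝ} (hr : r ∈ Ioc 0 1) (hs : 0 < s) :
    (exp s - 1)⁻¹ ≤ r * (exp (r * s) - 1)⁻¹ := by
  have hconv : exp (r * s) ≤ r * exp s + (1 - r) := by
    simpa using convexOn_exp.2 (mem_univ s) (mem_univ 0) hr.1.le (sub_nonneg.2 hr.2)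
      (add_sub_cancel r 1)
  have hrs : 0 < exp (r * s) - 1 := sub_pos.2 (one_lt_exp_iff.2 (mul_pos hr.1 hs))
  have hs' : 0 < exp s - 1 := sub_pos.2 (one_lt_exp_iff.2 hs)
  rw [← div_eq_mul_inv, inv_eq_one_div, div_le_div_iff₀ hs' hrs]
  linarith

lemma hasDerivAt_comp_const_mul {f : ℝ → ℝ} {f' r x : ℝ} (hf : HasDerivAt f f' (r * x)) :
    HasDerivAt (fun t => f (r * t)) (r * f') x := by
  simpa [Function.comp_def, mul_comm r] using hf.comp x ((hasDerivAt_id x).const_mul r)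

end RealAnalysis

section ExponentialVariable

/-- The function `s ↦ F(a, b; c; 1 - e⁻ˢ)`: in the variable `s = -log x` the powers `xᵗ` of the
theorem become the dilations `t * s`. -/
noncomputable def expHyp (a b c s : ℝ) : ℝ := ₂F₁ a b c (1 - exp (-s))

/-- The decay rate `-φ' / φ` of `φ = expHyp a b c`, in closed form. -/
noncomputable def decayRate (a b c s : ℝ) : ℝ :=
  -(a * b / c) * exp (-s) * expHyp (a + 1) (b + 1) (c + 1) s / expHyp a b c s

variable {a b c s : ℝ}

lemma one_sub_exp_neg_mem_Ico (hs : 0 ≤ s) : 1 - exp (-s) ∈ Ico (0 : ℝ) 1 :=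
  ⟨sub_nonneg.2 (exp_le_one_iff.2 (neg_nonpos.2 hs)), sub_lt_self 1 (exp_pos _)⟩

lemma norm_one_sub_exp_neg_lt_one (hs : 0 ≤ s) : ‖1 - exp (-s)‖ < 1 := by
  obtain ⟨h0, h1⟩ := one_sub_exp_neg_mem_Ico hs
  rwa [norm_of_nonneg h0]

lemma expHyp_zero (a b c : ℝ) : expHyp a b c 0 = 1 := by simp [expHyp]

lemma decayRate_zero (a b c : ℝ) : decayRate a b c 0 = -(a * b / c) := by
  simp [decayRate, expHyp_zero]

lemma expHyp_pos_of_pos (ha : 0 < a) (hb : 0 < b) (hc : 0 < c) (hs : 0 ≤ s) :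
    0 < expHyp a b c s :=
  have hy := one_sub_exp_neg_mem_Ico hs
  ordinaryHypergeometric_pos ha hb hc hy.1 hy.2

lemma hasDerivAt_expHyp (a b c : ℝ) (hs : 0 ≤ s) :
    HasDerivAt (expHyp a b c) (a * b / c * exp (-s) * expHyp (a + 1) (b + 1) (c + 1) s) s := by
  have hexp : HasDerivAt (fun s => 1 - exp (-s)) (exp (-s)) s := by
    simpa using (hasDerivAt_neg s).exp.const_sub 1
  refine ((hasDerivAt_ordinaryHypergeometric a b c
    (norm_one_sub_exp_neg_lt_one hs)).comp s hexp).congr_deriv ?_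
  rw [expHyp, mul_right_comm]

section Riccati

variable (ha : -1 < a) (hb : -1 < b) (hc : 0 < c) (habc : a + b + 1 = c)
include hc habc

lemma mul_expHyp (hs : 0 ≤ s) :
    c * expHyp a b c s = c * exp (-s) * expHyp (a + 1) (b + 1) (c + 1) s +
      (1 - exp (-s)) * exp (-s) *
        ((a + 1) * (b + 1) / (c + 1) * expHyp (a + 2) (b + 2) (c + 2) s) := by
  unfold expHyp
  rw [ordinaryHypergeometric_contiguous a b
    (fun n => (add_pos_of_pos_of_nonneg hc n.cast_nonneg).ne') (norm_one_sub_exp_neg_lt_one hs),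
    habc]
  ring

include ha hb

lemma exp_neg_mul_expHyp_add_one_le (hs : 0 ≤ s) :
    exp (-s) * expHyp (a + 1) (b + 1) (c + 1) s ≤ expHyp a b c s := by
  have ha₁ : 0 < a + 1 := by linarith
  have hb₁ : 0 < b + 1 := by linarith
  have hφ₂ : 0 < expHyp (a + 2) (b + 2) (c + 2) s :=
    expHyp_pos_of_pos (by linarith) (by linarith) (by linarith) hs
  have hy := (one_sub_exp_neg_mem_Ico hs).1
  refine le_of_mul_le_mul_left ?_ hc
  rw [mul_expHyp hc habc hs, ← mul_assoc]
  exact le_add_of_nonneg_right (by positivity)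

lemma expHyp_pos (hs : 0 ≤ s) : 0 < expHyp a b c s := by
  have hφ₁ : 0 < expHyp (a + 1) (b + 1) (c + 1) s :=
    expHyp_pos_of_pos (by linarith) (by linarith) (by linarith) hs
  exact (mul_pos (exp_pos _) hφ₁).trans_le (exp_neg_mul_expHyp_add_one_le ha hb hc habc hs)

lemma hasDerivAt_expHyp_decayRate (hs : 0 ≤ s) :
    HasDerivAt (expHyp a b c) (-(decayRate a b c s * expHyp a b c s)) s := by
  refine (hasDerivAt_expHyp a b c hs).congr_deriv ?_
  rw [decayRate, div_mul_cancel₀ _ (expHyp_pos ha hb hc habc hs).ne']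
  ring

lemma decayRate_nonneg (hab : a * b ≤ 0) (hs : 0 ≤ s) : 0 ≤ decayRate a b c s := by
  have hφ := expHyp_pos ha hb hc habc hs
  have hφ₁ : 0 < expHyp (a + 1) (b + 1) (c + 1) s :=
    expHyp_pos_of_pos (by linarith) (by linarith) (by linarith) hs
  have hκ : 0 ≤ -(a * b / c) := neg_nonneg.2 (div_nonpos_of_nonpos_of_nonneg hab hc.le)
  unfold decayRate
  positivity

lemma mul_decayRate_le (hab : a * b ≤ 0) (hs : 0 ≤ s) : c * decayRate a b c s ≤ -(a * b) := by
  have hratio := div_le_one_of_le₀ (exp_neg_mul_expHyp_add_one_le ha hb hc habc hs)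
    (expHyp_pos ha hb hc habc hs).le
  calc c * decayRate a b c s
      = -(a * b) * (exp (-s) * expHyp (a + 1) (b + 1) (c + 1) s / expHyp a b c s) := by
        unfold decayRate
        field_simp
    _ ≤ -(a * b) := mul_le_of_le_one_right (neg_nonneg.2 hab) hratio

lemma hasDerivAt_decayRate (hs : 0 ≤ s) :
    HasDerivAt (decayRate a b c) (decayRate a b c s ^ 2 - decayRate a b c s -
      a * b / c * exp (-s) ^ 2 * ((a + 1) * (b + 1) / (c + 1) *
        expHyp (a + 2) (b + 2) (c + 2) s) / expHyp a b c s) s := by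
  have hφ := (expHyp_pos ha hb hc habc hs).ne'
  have hexp : HasDerivAt (fun s => -(a * b / c) * exp (-s)) (a * b / c * exp (-s)) s := by
    simpa using (hasDerivAt_neg s).exp.const_mul (-(a * b / c))
  have hφ₁ := hasDerivAt_expHyp (a + 1) (b + 1) (c + 1) hs
  simp only [add_assoc, one_add_one_eq_two] at hφ₁
  refine ((hexp.mul hφ₁).div (hasDerivAt_expHyp_decayRate ha hb hc habc hs) hφ).congr_deriv ?_
  simp only [decayRate, Pi.mul_apply]
  field_simp
  ring

-- Euler's equation for `φ = expHyp a b c` becomes a first-order Riccati equation for `-φ' / φ`.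
lemma hasDerivAt_decayRate_riccati (hs : 0 < s) :
    HasDerivAt (decayRate a b c) (decayRate a b c s ^ 2 - decayRate a b c s +
      (-(a * b) - c * decayRate a b c s) * (exp s - 1)⁻¹) s := by
  have hφ := (expHyp_pos ha hb hc habc hs.le).ne'
  have hexp : exp s - 1 ≠ 0 := (sub_pos.2 (one_lt_exp_iff.2 hs)).ne'
  have hmul : exp (-s) * (exp s - 1) = 1 - exp (-s) := by
    rw [mul_sub, ← exp_add, neg_add_cancel, exp_zero, mul_one]
  set H := (a + 1) * (b + 1) / (c + 1) * expHyp (a + 2) (b + 2) (c + 2) s with hH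
  have hdefect : -(a * b) - c * decayRate a b c s =
      -(a * b / c * exp (-s) ^ 2 * H / expHyp a b c s) * (exp s - 1) :=
    calc -(a * b) - c * decayRate a b c s
        = -(a * b / c) * (c * expHyp a b c s -
            c * exp (-s) * expHyp (a + 1) (b + 1) (c + 1) s) / expHyp a b c s := by
          unfold decayRate
          field_simp
          ring
      _ = -(a * b / c) * (exp (-s) * (exp s - 1) * exp (-s) * H) / expHyp a b c s := by
          rw [mul_expHyp hc habc hs.le, add_sub_cancel_left, hmul]
      _ = _ := by ring
  refine (hasDerivAt_decayRate ha hb hc habc hs.le).congr_deriv ?_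
  rw [hdefect, mul_inv_cancel_right₀ hexp, ← hH, sub_eq_add_neg]

end Riccati

section Comparison

variable {a' b' r : ℝ} (ha : -1 < a) (hb : -1 < b) (ha' : -1 < a') (hb' : -1 < b') (hc : 0 < c)
  (habc : a + b + 1 = c) (habc' : a' + b' + 1 = c)
include ha hb ha' hb' hc habc habc'

lemma deriv_mul_decayRate_sub_pos (hab : a * b ≤ 0) (hr : r ∈ Ioc 0 1)
    (hlt : r * (a' * b') < a * b) (hs : 0 < s)
    (heq : r * decayRate a' b' c (r * s) = decayRate a b c s) :
    0 < deriv (fun t => r * decayRate a' b' c (r * t) - decayRate a b c t) s := by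
  have hrs : 0 < r * s := mul_pos hr.1 hs
  have hderiv := ((hasDerivAt_comp_const_mul (hasDerivAt_decayRate_riccati ha' hb' hc habc'
    hrs)).const_mul r).sub (hasDerivAt_decayRate_riccati ha hb hc habc hs)
  refine hderiv.deriv.symm.subst ?_
  set u := decayRate a b c s
  have hu : 0 ≤ u := decayRate_nonneg ha hb hc habc hab hs.le
  have hcu : c * u ≤ -(a * b) := mul_decayRate_le ha hb hc habc hab hs.le
  have hS : 0 < (exp (r * s) - 1)⁻¹ := inv_pos.2 (sub_pos.2 (one_lt_exp_iff.2 hrs))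
  calc 0 < (1 - r) * u + r * (exp (r * s) - 1)⁻¹ * (a * b - r * (a' * b')) +
        (r * (exp (r * s) - 1)⁻¹ - (exp s - 1)⁻¹) * (-(a * b) - c * u) := by
        have h₁ := mul_nonneg (sub_nonneg.2 hr.2) hu
        have h₂ := mul_pos (mul_pos hr.1 hS) (sub_pos.2 hlt)
        have h₃ := mul_nonneg (sub_nonneg.2 (inv_exp_sub_one_le hr hs)) (sub_nonneg.2 hcu)
        linarith
    _ = _ := by
        rw [← heq]
        ring

lemma decayRate_lt_mul_decayRate (hab : a * b ≤ 0) (hr : r ∈ Ioc 0 1)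
    (hlt : r * (a' * b') < a * b) (hs : 0 ≤ s) :
    decayRate a b c s < r * decayRate a' b' c (r * s) := by
  rw [← sub_pos]
  refine pos_of_deriv_pos_of_eq_zero (x₀ := 0)
    (f := fun t => r * decayRate a' b' c (r * t) - decayRate a b c t) (fun t ht => ?_) ?_
    (fun t ht hzero => ?_) hs
  · exact ((hasDerivAt_comp_const_mul (hasDerivAt_decayRate ha' hb' hc habc'
      (mul_nonneg hr.1.le ht))).const_mul r).sub
      (hasDerivAt_decayRate ha hb hc habc ht) |>.differentiableAt
  · calc 0 < (a * b - r * (a' * b')) / c := div_pos (sub_pos.2 hlt) hc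
      _ = _ := by
        rw [mul_zero, decayRate_zero, decayRate_zero]
        ring
  · exact deriv_mul_decayRate_sub_pos ha hb ha' hb' hc habc habc' hab hr hlt ht
      (sub_eq_zero.1 hzero)

lemma hasDerivAt_log_expHyp_sub (hr : 0 ≤ r) (hs : 0 ≤ s) :
    HasDerivAt (fun t => log (expHyp a b c t) - log (expHyp a' b' c (r * t)))
      (r * decayRate a' b' c (r * s) - decayRate a b c s) s := by
  have hφ := (expHyp_pos ha hb hc habc hs).ne'
  have hφ' := (expHyp_pos ha' hb' hc habc' (mul_nonneg hr hs)).ne'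
  refine (((hasDerivAt_expHyp_decayRate ha hb hc habc hs).log hφ).sub
    ((hasDerivAt_comp_const_mul (hasDerivAt_expHyp_decayRate ha' hb' hc habc'
      (mul_nonneg hr hs))).log hφ')).congr_deriv ?_
  field_simp
  ring

lemma expHyp_mul_lt_expHyp (hab : a * b ≤ 0) (hr : r ∈ Ioc 0 1) (hlt : r * (a' * b') < a * b)
    (hs : 0 < s) : expHyp a' b' c (r * s) < expHyp a b c s := by
  have hderiv {t : ℝ} (ht : 0 ≤ t) :=
    hasDerivAt_log_expHyp_sub ha hb ha' hb' hc habc habc' hr.1.le ht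
  have hmono : StrictMonoOn (fun t => log (expHyp a b c t) - log (expHyp a' b' c (r * t)))
      (Ici 0) :=
    strictMonoOn_of_hasDerivWithinAt_pos (convex_Ici 0)
      (fun t ht => (hderiv ht).continuousAt.continuousWithinAt)
      (fun t ht => (hderiv (interior_subset ht)).hasDerivWithinAt) fun t ht =>
        sub_pos.2 (decayRate_lt_mul_decayRate ha hb ha' hb' hc habc habc' hab hr hlt
          (interior_subset ht))
  have hlog := hmono self_mem_Ici hs.le hs
  simp only [mul_zero, expHyp_zero, log_one, sub_zero, sub_pos] at hlog
  exact (log_lt_log_iff (expHyp_pos ha' hb' hc habc' (mul_nonneg hr.1.le hs.le))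
    (expHyp_pos ha hb hc habc hs.le)).1 hlog

end Comparison

lemma mul_le_mul_of_forall_expHyp_mul_le {a' b' r : ℝ} (hc : 0 < c)
    (hle : ∀ s, 0 < s → expHyp a' b' c (r * s) ≤ expHyp a b c s) : r * (a' * b') ≤ a * b := by
  have hderiv : HasDerivAt (fun t => expHyp a b c t - expHyp a' b' c (r * t))
      ((a * b - r * (a' * b')) / c) 0 := by
    have hφ' : HasDerivAt (expHyp a' b' c) (a' * b' / c) (r * 0) := by
      simpa [expHyp_zero] using hasDerivAt_expHyp a' b' c le_rfl
    refine ((hasDerivAt_expHyp a b c le_rfl).sub (hasDerivAt_comp_const_mul hφ')).congr_deriv ?_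
    rw [neg_zero, exp_zero, expHyp_zero]
    ring
  have hnonneg : 0 ≤ (a * b - r * (a' * b')) / c := by
    refine ge_of_tendsto hderiv.tendsto_slope_zero_right ?_
    filter_upwards [self_mem_nhdsWithin] with t (ht : 0 < t)
    simpa [expHyp_zero] using mul_nonneg (inv_nonneg.2 ht.le) (sub_nonneg.2 (hle t ht))
  exact sub_nonneg.1 (nonneg_of_mul_nonneg_left hnonneg (inv_pos.2 hc))

end ExponentialVariable

section CriticalShift

/-- The larger root `δ` of `(a - 1 - δ) * (b + δ) = r * ((a - 1) * b)`; it is the supremum of the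
theorem, with `r = c / d`. -/
noncomputable def criticalShift (a b r : ℝ) : ℝ :=
  ((a - b - 1) + √((a + b - 1) ^ 2 + 4 * (b * (1 - a)) * r)) / 2

variable {a b r δ : ℝ}

lemma lt_criticalShift_iff (ha : a - 1 ≤ δ) (hb : -b ≤ δ) :
    δ < criticalShift a b r ↔ r * ((a - 1) * b) < (a - 1 - δ) * (b + δ) := by
  rw [criticalShift, lt_div_iff₀ two_pos, ← sub_lt_iff_lt_add', lt_sqrt (by linarith)]
  constructor <;> intro h <;> linarith

lemma le_criticalShift (h : r * ((a - 1) * b) ≤ (a - 1 - δ) * (b + δ)) :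
    δ ≤ criticalShift a b r := by
  rw [criticalShift, le_div_iff₀ two_pos, ← sub_le_iff_le_add']
  refine le_sqrt_of_sq_le ?_
  linarith

lemma max_lt_criticalShift (ha : a < 1) (hb : 0 < b) (hr : 0 < r) :
    max (a - 1) (-b) < criticalShift a b r := by
  rw [lt_criticalShift_iff (le_max_left _ _) (le_max_right _ _)]
  calc r * ((a - 1) * b) < 0 :=
        mul_neg_of_pos_of_neg hr (mul_neg_of_neg_of_pos (sub_neg.2 ha) hb)
    _ = _ := by rcases max_choice (a - 1) (-b) with h | h <;> simp [h]

lemma criticalShift_nonpos (ha : a ≤ 1) (hb : 0 ≤ b) (hr : r ≤ 1) : criticalShift a b r ≤ 0 := by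
  rw [← not_lt, lt_criticalShift_iff (by linarith) (by linarith), not_lt]
  linarith [mul_nonneg (sub_nonneg.2 hr) (mul_nonneg (sub_nonneg.2 ha) hb)]

end CriticalShift

lemma hyp_one_sub_rpow (a b c t : ℝ) {x : ℝ} (hx : 0 < x) :
    hyp a b c (1 - x ^ t) = expHyp a b c (t * -log x) := by
  rw [hyp_eq_ordinaryHypergeometric, expHyp, rpow_def_of_pos hx, mul_neg, neg_neg, mul_comm]

lemma forall_hyp_one_sub_rpow_lt_iff {a b a' b' C c d : ℝ} (hd : 0 < d) :
    (∀ x ∈ Ioo (0 : ℝ) 1, hyp a' b' C (1 - x ^ c) < hyp a b C (1 - x ^ d)) ↔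
      ∀ s, 0 < s → expHyp a' b' C (c / d * s) < expHyp a b C s := by
  refine ⟨fun h s hs => ?_, fun h x hx => ?_⟩
  · have hx := h (exp (-(s / d))) ⟨exp_pos _, exp_lt_one_iff.2 (neg_neg_of_pos (div_pos hs hd))⟩
    rw [hyp_one_sub_rpow _ _ _ _ (exp_pos _), hyp_one_sub_rpow _ _ _ _ (exp_pos _), log_exp,
      neg_neg, mul_div_cancel₀ s hd.ne'] at hx
    rwa [div_mul_eq_mul_div, mul_div_assoc]
  · have hs := h (d * -log x) (mul_pos hd (neg_pos.2 (log_neg hx.1 hx.2)))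
    rwa [hyp_one_sub_rpow _ _ _ _ hx.1, hyp_one_sub_rpow _ _ _ _ hx.1, ← div_mul_cancel₀ c hd.ne',
      mul_assoc]

lemma add_div_mul_add_one_add_le_one {x y : ℝ} (hx : 0 ≤ x) (hy : 0 ≤ y) :
    (x + y) / (x * (y + 1) + y) ≤ 1 :=
  div_le_one_of_le₀ (by linarith [mul_nonneg hx hy]) (by positivity)

theorem stmt3_general {a b c d : ℝ} (ha : a ∈ Ioo (0 : ℝ) 1) (hb : 0 < b) (hc : 0 < c)
    (hcd : c ≤ d) :
    IsLUB {δ : ℝ | δ ∈ Ioo (a - 1) 0 ∧ ∀ x ∈ Ioo (0 : ℝ) 1,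
        hyp (a - 1) b (a + b) (1 - x ^ c) < hyp (a - 1 - δ) (b + δ) (a + b) (1 - x ^ d)}
      (criticalShift a b (c / d)) := by
  have hd : 0 < d := hc.trans_le hcd
  have hr : c / d ∈ Ioc 0 1 := ⟨div_pos hc hd, div_le_one_of_le₀ hcd hd.le⟩
  have hp : 0 < a + b := add_pos ha.1 hb
  simp only [forall_hyp_one_sub_rpow_lt_iff hd]
  refine (isLUB_Ioo (max_lt_criticalShift ha.2 hb hr.1)).of_subset_of_superset isLUB_Iic
    (fun δ hδ => ?_) fun δ hδ => ?_
  · obtain ⟨haδ, hbδ⟩ := max_lt_iff.1 hδ.1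
    have hδ₀ : δ < 0 := hδ.2.trans_le (criticalShift_nonpos ha.2.le hb.le hr.2)
    have hprod : (a - 1 - δ) * (b + δ) ≤ 0 :=
      mul_nonpos_of_nonpos_of_nonneg (by linarith) (by linarith)
    exact ⟨⟨haδ, hδ₀⟩, fun s => expHyp_mul_lt_expHyp (by linarith [ha.1]) (by linarith)
      (by linarith [ha.1]) (by linarith) hp (by ring) (by ring) hprod hr
      ((lt_criticalShift_iff haδ.le hbδ.le).1 hδ.2)⟩
  · exact le_criticalShift
      (mul_le_mul_of_forall_expHyp_mul_le hp fun s hs => (hδ.2 s hs).le)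

theorem stmt3 (a b c d α β p h k : ℝ)
    (ha : a ∈ Ioo (0:ℝ) 1) (hb : 1 - a ≤ b)
    (hα : α = a * (b + 1)) (hβ : β = b * (1 - a)) (hp : p = a + b)
    (hh : h = α * β * (p + β)) (hk : k = β * (p + 1) + p)
    (hcase : α ≥ Real.sqrt 3 * β ∨ (α < Real.sqrt 3 * β ∧ 4 * h * (β + p) ≥ p ^ 4))
    (hc : 0 < c) (hd : 0 < d) (hcd : c / d ≤ (β + p) / k) :
    sSup {δ : ℝ | δ ∈ Ioo (a - 1) 0 ∧ ∀ x ∈ Ioo (0:ℝ) 1,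
        hyp (a - 1) b (a + b) (1 - x ^ c) < hyp (a - 1 - δ) (b + δ) (a + b) (1 - x ^ d)}
      = ((a - b - 1) + Real.sqrt ((p - 1) ^ 2 + 4 * β * (c / d))) / 2 := by
  subst hβ hp hk
  have hb₀ : 0 < b := (sub_pos.2 ha.2).trans_le hb
  have hr : c / d ≤ 1 := hcd.trans <| add_div_mul_add_one_add_le_one
    (mul_nonneg hb₀.le (sub_nonneg.2 ha.2.le)) (add_pos ha.1 hb₀).le
  have hlub := stmt3_general ha hb₀ hc ((div_le_one hd).1 hr)
  exact hlub.csSup_eq hlub.nonempty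
end
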